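/- No configuration of at most seven shortcuts achieves diameter smaller than π/2 + 1: every finite set S of shortcuts with |S| ≤ 7 satisfies diam(S) ≥ π/2 + 1. Consequently diam(7) = diam(6) = π/2 + 1. -/

import Mathlib

open Real MeasureTheory

/-- Arc distance between points on the unit circle, given by their polar angles:
the length of the shorter arc between them. -/
noncomputable def arcDist (p q : ℝ) : ℝ := ⨅ n : ℤ, |p - q + 2 * π * n|

/-- Euclidean length of the chord between the circle points with angles `u` and `v`. -/
noncomputable def chordLen (u v : ℝ) : ℝ := 2 * Real.sin (arcDist u v / 2)

/-- A pair of angles is a genuine shortcut (chord) if its endpoints are distinct points. -/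
def IsShortcut (s : ℝ × ℝ) : Prop := arcDist s.1 s.2 ≠ 0

/-- δ(a) = arcsin(a/2) - a/2. -/
noncomputable def sdelta (a : ℝ) : ℝ := Real.arcsin (a / 2) - a / 2

/-- Cost of a path that starts at `p`, fully traverses the listed chords in order
(travelling along the circle in between), and ends at `q`. -/
noncomputable def walkCost (q : ℝ) : ℝ → List (ℝ × ℝ) → ℝ
  | p, [] => arcDist p q
  | p, e :: L => arcDist p e.1 + chordLen e.1 e.2 + walkCost q e.2 L

/-- Shortest-path distance from `p` to `q` using the shortcuts of `S`
(each usable in either orientation, and always traversed completely). -/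
noncomputable def dS (S : Finset (ℝ × ℝ)) (p q : ℝ) : ℝ :=
  sInf {c | ∃ L : List (ℝ × ℝ), (∀ e ∈ L, e ∈ S ∨ (e.2, e.1) ∈ S) ∧ c = walkCost q p L}

/-- Diameter of the circle augmented with the shortcuts of `S`. -/
noncomputable def diamS (S : Finset (ℝ × ℝ)) : ℝ :=
  sSup {d | ∃ p q : ℝ, d = dS S p q}

/-- diam(k): the optimal diameter achievable with `k` shortcuts. -/
noncomputable def diamK (k : ℕ) : ℝ :=
  sInf {d | ∃ S : Finset (ℝ × ℝ), S.card = k ∧ (∀ s ∈ S, IsShortcut s) ∧ d = diamS S}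

/-- Distance from `p` to `q` when a single shortcut with endpoints `u`, `v` is available. -/
noncomputable def dOne (u v p q : ℝ) : ℝ :=
  min (arcDist p q)
    (min (arcDist p u + chordLen u v + arcDist v q)
      (arcDist p v + chordLen u v + arcDist u q))

/-- Two angles represent the same point of the circle. -/
def SamePoint (p q : ℝ) : Prop := arcDist p q = 0

/-- Two pairs of angles represent the same chord of the circle. -/
def SameChord (s t : ℝ × ℝ) : Prop :=
  (SamePoint s.1 t.1 ∧ SamePoint s.2 t.2) ∨ (SamePoint s.1 t.2 ∧ SamePoint s.2 t.1)

/-- `p` lies in the deep umbra of the shortcut from `u` to `u + β`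
(where `0 < β ≤ π` is the counterclockwise arc spanned by the shortcut):
`p` lies in the inner umbra, and `|p u'| + |s| ≥ d(p, v')` where `u'` is the
endpoint closer to `p` and `v'` the other one. -/
def InDeepUmbra (u β p : ℝ) : Prop :=
  (∃ t : ℝ, sdelta (chordLen u (u + β)) ≤ t ∧ t ≤ β - sdelta (chordLen u (u + β)) ∧
    arcDist p (u + t) = 0) ∧
  (arcDist p u ≤ arcDist p (u + β) →
    arcDist p (u + β) ≤ chordLen p u + chordLen u (u + β)) ∧
  (arcDist p (u + β) ≤ arcDist p u →
    arcDist p u ≤ chordLen p (u + β) + chordLen u (u + β))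

/-- `d` equals δ*_k : for `k ∈ {3,4,5}` this is `δ(a*_k)` where `a*_k + δ(a*_k) = (k-1)π/k`,
and for `k = 6` it is `δ(2) = π/2 - 1`. -/
def dstarSpec (k : ℕ) (d : ℝ) : Prop :=
  (k = 6 ∧ d = sdelta 2) ∨
    (∃ a, a ∈ Set.Icc (0 : ℝ) 2 ∧ a + sdelta a = ((k : ℝ) - 1) * π / k ∧ d = sdelta a)


/-! ### Arc distance -/

lemma arc_le (p q : ℝ) (n : ℤ) : arcDist p q ≤ |p - q + 2 * π * n| :=
  ciInf_le ⟨0, by rintro _ ⟨m, rfl⟩; exact abs_nonneg _⟩ n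

lemma arc_attain (p q : ℝ) : ∃ n : ℤ, arcDist p q = |p - q + 2 * π * n| := by
  have hpi := Real.pi_pos
  refine ⟨-round ((p - q) / (2 * π)), le_antisymm (arc_le _ _ _) ?_⟩
  apply le_ciInf
  intro n
  have h := round_le ((p - q) / (2 * π)) (-n)
  have e1 : ∀ m : ℤ, |p - q + 2 * π * m| = 2 * π * |(p - q) / (2 * π) - ((-m : ℤ) : ℝ)| := by
    intro m
    rw [← abs_of_pos (show (0:ℝ) < 2 * π by positivity), ← abs_mul,
      abs_of_pos (show (0:ℝ) < 2 * π by positivity)]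
    congr 1
    push_cast
    field_simp
    ring
  rw [e1, e1]
  simp only [neg_neg]
  gcongr

lemma arc_nonneg (p q : ℝ) : 0 ≤ arcDist p q := by
  obtain ⟨n, h⟩ := arc_attain p q
  rw [h]; exact abs_nonneg _

lemma arc_le_pi (p q : ℝ) : arcDist p q ≤ π := by
  have hpi := Real.pi_pos
  have h := abs_sub_round ((p - q) / (2 * π))
  have h2 := arc_le p q (-round ((p - q) / (2 * π)))
  have e : p - q + 2 * π * ((-round ((p - q) / (2 * π)) : ℤ) : ℝ)
      = 2 * π * ((p - q) / (2 * π) - round ((p - q) / (2 * π))) := by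
    push_cast
    field_simp
    ring
  rw [e, abs_mul, abs_of_pos (show (0:ℝ) < 2 * π by positivity)] at h2
  nlinarith

lemma arc_symm_le (p q : ℝ) : arcDist p q ≤ arcDist q p := by
  obtain ⟨n, h⟩ := arc_attain q p
  rw [h]
  refine (arc_le p q (-n)).trans (le_of_eq ?_)
  rw [← abs_neg]; congr 1; push_cast; ring

lemma arc_symm (p q : ℝ) : arcDist p q = arcDist q p :=
  le_antisymm (arc_symm_le _ _) (arc_symm_le _ _)

lemma arc_tri (p q r : ℝ) : arcDist p r ≤ arcDist p q + arcDist q r := by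
  obtain ⟨n, h⟩ := arc_attain p q
  obtain ⟨m, h'⟩ := arc_attain q r
  rw [h, h']
  refine (arc_le p r (n + m)).trans (le_trans (le_of_eq ?_) (abs_add_le _ _))
  congr 1; push_cast; ring

lemma arc_self (p : ℝ) : arcDist p p = 0 :=
  le_antisymm (by simpa using arc_le p p 0) (arc_nonneg _ _)

lemma arc_le_abs (p q : ℝ) : arcDist p q ≤ |p - q| := by
  simpa using arc_le p q 0

/-- Equality of points of the circle. -/
def Eqv (x y : ℝ) : Prop := ∃ n : ℤ, x = y + 2 * π * n

lemma Eqv.arc {x y : ℝ} (h : Eqv x y) : arcDist x y = 0 := by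
  obtain ⟨n, rfl⟩ := h
  refine le_antisymm ?_ (arc_nonneg _ _)
  refine (arc_le _ _ (-n)).trans (le_of_eq ?_)
  rw [abs_eq_zero]; push_cast; ring

lemma arc_congr_left {x y : ℝ} (h : Eqv x y) (z : ℝ) : arcDist x z = arcDist y z := by
  have h0 := h.arc
  have h1 := arc_tri x y z
  have h2 := arc_tri y x z
  rw [arc_symm y x] at h2
  linarith

lemma arc_congr_right {x y : ℝ} (h : Eqv x y) (z : ℝ) : arcDist z x = arcDist z y := by
  rw [arc_symm z x, arc_symm z y, arc_congr_left h]

/-- exact value on `[0, π]` -/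
lemma arc_eq_of_le {x y t : ℝ} (h : x - y = t) (ht : |t| ≤ π) : arcDist x y = |t| := by
  have hpi := Real.pi_pos
  refine le_antisymm (by rw [← h]; exact arc_le_abs _ _) ?_
  obtain ⟨n, hn⟩ := arc_attain x y
  rw [hn, h]
  by_cases h0 : n = 0
  · simp [h0]
  · have h1 : (1:ℝ) ≤ |(n:ℝ)| := by exact_mod_cast Int.one_le_abs h0
    have h2 : |2 * π * (n:ℝ)| = 2 * π * |(n:ℝ)| := by
      rw [abs_mul, abs_of_pos (show (0:ℝ) < 2 * π by positivity)]
    have h3 : |2 * π * (n:ℝ)| ≤ |t + 2 * π * n| + |t| := by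
      have := abs_sub (t + 2 * π * n) t
      simpa using this
    nlinarith

/-! ### Paths in the normalized model -/

/-- start point of a directed shortcut -/
def src (u θ : Fin 7 → ℝ) (e : Fin 7 × Bool) : ℝ := if e.2 then u e.1 else u e.1 + 2 * θ e.1

/-- end point of a directed shortcut -/
def tgt (u θ : Fin 7 → ℝ) (e : Fin 7 × Bool) : ℝ := if e.2 then u e.1 + 2 * θ e.1 else u e.1

/-- cost of a path -/
noncomputable def W (u θ : Fin 7 → ℝ) (q : ℝ) : ℝ → List (Fin 7 × Bool) → ℝ
  | p, [] => arcDist p q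
  | p, e :: L => arcDist p (src u θ e) + 2 * Real.sin (θ e.1) + W u θ q (tgt u θ e) L

/-- total saving of a list -/
noncomputable def sav (θ : Fin 7 → ℝ) (L : List (Fin 7 × Bool)) : ℝ :=
  (L.map fun e => 2 * (θ e.1 - Real.sin (θ e.1))).sum

/-- The range of half-angles. -/
def Good (θ : Fin 7 → ℝ) : Prop := ∀ i, 0 < θ i ∧ θ i ≤ π / 2

lemma Good.sin_pos {θ : Fin 7 → ℝ} (h : Good θ) (i : Fin 7) : 0 < Real.sin (θ i) :=
  Real.sin_pos_of_pos_of_lt_pi (h i).1 (by have := (h i).2; have := Real.pi_pos; linarith)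

lemma Good.sin_lt {θ : Fin 7 → ℝ} (h : Good θ) (i : Fin 7) : Real.sin (θ i) < θ i :=
  Real.sin_lt (h i).1

lemma arc_src_tgt (u θ : Fin 7 → ℝ) (h : Good θ) (e : Fin 7 × Bool) :
    arcDist (src u θ e) (tgt u θ e) = 2 * θ e.1 := by
  have h1 := h e.1
  unfold src tgt
  split_ifs
  · rw [arc_eq_of_le (t := - (2 * θ e.1)) (by ring) (by rw [abs_neg, abs_of_pos] <;> linarith),
      abs_neg, abs_of_pos] ; linarith
  · rw [arc_eq_of_le (t := (2 * θ e.1)) (by ring) (by rw [abs_of_pos] <;> linarith),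
      abs_of_pos] ; linarith

variable {u θ : Fin 7 → ℝ}

lemma W_nonneg (hg : Good θ) (q p : ℝ) (L) : 0 ≤ W u θ q p L := by
  induction L generalizing p with
  | nil => exact arc_nonneg _ _
  | cons e L ih =>
    have := arc_nonneg p (src u θ e)
    have := hg.sin_pos e.1
    have := ih (tgt u θ e)
    simp only [W]; linarith

lemma W_append (q p : ℝ) (L1 : List (Fin 7 × Bool)) (e) (L2) :
    W u θ q p (L1 ++ e :: L2) =
      W u θ (src u θ e) p L1 + 2 * Real.sin (θ e.1) + W u θ q (tgt u θ e) L2 := by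
  induction L1 generalizing p with
  | nil => simp [W]
  | cons f L ih => simp only [List.cons_append, W, ih]; ring

lemma W_start (q p p' : ℝ) (L) : W u θ q p L ≤ arcDist p p' + W u θ q p' L := by
  cases L with
  | nil => exact arc_tri _ _ _
  | cons e L => simp only [W]; linarith [arc_tri p p' (src u θ e)]

lemma W_concat (q p x : ℝ) (L1 L2) :
    W u θ q p (L1 ++ L2) ≤ W u θ x p L1 + W u θ q x L2 := by
  induction L1 generalizing p with
  | nil => simpa [W] using W_start q p x L2
  | cons f L ih => simp only [List.cons_append, W]; linarith [ih (tgt u θ f)]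

lemma W_sav (hg : Good θ) (q p : ℝ) (L) : arcDist p q ≤ W u θ q p L + sav θ L := by
  induction L generalizing p with
  | nil => simp [W, sav]
  | cons e L ih =>
    have h1 := arc_tri p (src u θ e) q
    have h2 := arc_tri (src u θ e) (tgt u θ e) q
    have h3 := ih (tgt u θ e)
    rw [arc_src_tgt u θ hg] at h2
    simp only [W, sav, List.map_cons, List.sum_cons] at *
    linarith

lemma W_len (hg : Good θ) (q p : ℝ) (L) :
    (L.map fun e => 2 * Real.sin (θ e.1)).sum ≤ W u θ q p L := by
  induction L generalizing p with
  | nil => simpa [W] using arc_nonneg _ _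
  | cons e L ih =>
    have h3 := ih (tgt u θ e)
    have := arc_nonneg p (src u θ e)
    simp only [W, List.map_cons, List.sum_cons] at *
    linarith

lemma dup_split (L : List (Fin 7 × Bool)) (h : ¬ (L.map Prod.fst).Nodup) :
    ∃ L1 e L2 f L3, L = L1 ++ e :: (L2 ++ f :: L3) ∧ e.1 = f.1 := by
  induction L with
  | nil => simp at h
  | cons e L ih =>
    by_cases h1 : e.1 ∈ L.map Prod.fst
    · rw [List.mem_map] at h1
      obtain ⟨f, hf, hfe⟩ := h1
      obtain ⟨L2, L3, rfl⟩ := List.append_of_mem hf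
      exact ⟨[], e, L2, f, L3, rfl, hfe.symm⟩
    · have : ¬ (L.map Prod.fst).Nodup := by
        intro h2; exact h (by rw [List.map_cons, List.nodup_cons]; exact ⟨h1, h2⟩)
      obtain ⟨L1, e', L2, f, L3, rfl, h3⟩ := ih this
      exact ⟨e :: L1, e', L2, f, L3, rfl, h3⟩

/-- `i` covers the pair with total remaining budget `R`. -/
def Cov (u θ : Fin 7 → ℝ) (i : Fin 7) (R p q : ℝ) : Prop :=
  arcDist p (u i) + arcDist (u i + 2 * θ i) q < R ∨
  arcDist p (u i + 2 * θ i) + arcDist (u i) q < R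

lemma Cov.symm {i : Fin 7} {R p q : ℝ} (h : Cov u θ i R p q) : Cov u θ i R q p := by
  rcases h with h | h
  · right; rw [arc_symm q, arc_symm _ p]; linarith
  · left; rw [arc_symm q, arc_symm _ p]; linarith

/-- Combinatorial consequences of the existence of a cheap path. -/
lemma core (hg : Good θ) (D p q : ℝ) (hex : ∃ L, W u θ q p L < D) :
    ∃ U : Finset (Fin 7), (∑ i ∈ U, 2 * Real.sin (θ i) < D) ∧
      (U = ∅ → arcDist p q < D) ∧
      (∀ i ∈ U, Cov u θ i (D - 2 * Real.sin (θ i) +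
        ∑ j ∈ U.erase i, 2 * (θ j - Real.sin (θ j))) p q) ∧
      ((∀ i, 2 * (θ 6 - Real.sin (θ 6)) ≤ 2 * Real.sin (θ i)) →
        θ 6 - Real.sin (θ 6) ≤ arcDist p (u 6) →
        θ 6 - Real.sin (θ 6) ≤ arcDist p (u 6 + 2 * θ 6) →
        arcDist p (u 6) + arcDist p (u 6 + 2 * θ 6) ≤ 2 * θ 6 → 6 ∉ U) ∧
      (∀ i, i ≠ 6 → U = {i, 6} → ∃ x, (x = u 6 ∨ x = u 6 + 2 * θ 6) ∧
        (arcDist p x + 2 * Real.sin (θ 6) + 2 * Real.sin (θ i) < D ∨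
         arcDist x q + 2 * Real.sin (θ 6) + 2 * Real.sin (θ i) < D)) := by
  classical
  have hex' : ∃ n, ∃ L, W u θ q p L < D ∧ L.length = n := by
    obtain ⟨L, hL⟩ := hex; exact ⟨_, L, hL, rfl⟩
  obtain ⟨L, hL, hlen⟩ := Nat.find_spec hex'
  have hmin : ∀ L', W u θ q p L' < D → L.length ≤ L'.length := by
    intro L' h'
    rw [hlen]; exact Nat.find_min' hex' ⟨L', h', rfl⟩
  clear hlen
  have hnd : (L.map Prod.fst).Nodup := by
    by_contra hc
    obtain ⟨L1, e, L2, f, L3, rfl, hef⟩ := dup_split L hc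
    rw [W_append, W_append] at hL
    have h1 := W_nonneg (u := u) hg (src u θ f) (tgt u θ e) L2
    have h2 := hg.sin_pos e.1
    by_cases hb : e.2 = f.2
    · have : e = f := Prod.ext hef hb
      subst this
      have h3 := hmin (L1 ++ e :: L3) (by rw [W_append]; linarith)
      simp at h3
      omega
    · have ht : tgt u θ f = src u θ e := by
        unfold src tgt; rw [hef]
        cases h : e.2 <;> cases h' : f.2 <;> simp_all
      have h4 := W_concat (u := u) (θ := θ) q p (src u θ e) L1 L3
      rw [ht] at hL
      rw [← hef] at hL
      have h3 := hmin (L1 ++ L3) (by linarith)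
      simp at h3
      omega
  have hsum : ∀ g : Fin 7 → ℝ, ∑ i ∈ (L.map Prod.fst).toFinset, g i
      = (L.map fun e => g e.1).sum := by
    intro g
    rw [List.sum_toFinset _ hnd, List.map_map]; rfl
  refine ⟨(L.map Prod.fst).toFinset, ?_, ?_, ?_, ?_, ?_⟩
  · rw [hsum (fun i => 2 * Real.sin (θ i))]
    exact (W_len hg q p L).trans_lt hL
  · intro h0
    have : L = [] := by
      cases L with
      | nil => rfl
      | cons e L => simp at h0
    subst this; simpa [W] using hL
  · intro i hi
    have h0 := Finset.add_sum_erase _ (fun j => 2 * (θ j - Real.sin (θ j))) hi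
    rw [hsum (fun j => 2 * (θ j - Real.sin (θ j)))] at h0
    generalize (∑ j ∈ ((L.map Prod.fst).toFinset).erase i, 2 * (θ j - Real.sin (θ j))) = E
      at h0 ⊢
    rw [List.mem_toFinset, List.mem_map] at hi
    obtain ⟨e, he, rfl⟩ := hi
    obtain ⟨L1, L2, rfl⟩ := List.append_of_mem he
    rw [W_append] at hL
    have h1 := W_sav (u := u) hg (src u θ e) p L1
    have h2 := W_sav (u := u) hg q (tgt u θ e) L2
    simp only [List.map_append, List.map_cons, List.sum_append, List.sum_cons] at h0
    unfold sav at h1 h2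
    unfold Cov
    by_cases hb : e.2
    · left
      simp only [src, tgt, hb, if_true] at *
      linarith
    · right
      simp only [src, tgt, hb] at *
      simp at *
      linarith
  · intro hs h1 h2 h3 hi
    rw [List.mem_toFinset, List.mem_map] at hi
    obtain ⟨e, he, he6⟩ := hi
    obtain ⟨L1, L2, rfl⟩ := List.append_of_mem he
    rw [W_append] at hL
    have hp := W_start (u := u) (θ := θ) q p (tgt u θ e) L2
    have key : arcDist p (tgt u θ e) ≤ W u θ (src u θ e) p L1 + 2 * Real.sin (θ e.1) := by
      cases L1 with
      | nil =>
        simp only [W]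
        unfold src tgt; rw [he6]
        split_ifs <;> linarith
      | cons f L1 =>
        have h5 := W_len (u := u) hg (src u θ e) p (f :: L1)
        have h6 : 0 ≤ (L1.map fun e => 2 * Real.sin (θ e.1)).sum := by
          apply List.sum_nonneg
          intro x hx
          rw [List.mem_map] at hx
          obtain ⟨g, _, rfl⟩ := hx
          have := hg.sin_pos g.1
          linarith
        rw [List.map_cons, List.sum_cons] at h5
        have h7 := hs f.1
        have h8 : arcDist p (tgt u θ e) ≤ 2 * θ 6 := by
          have := arc_nonneg p (u 6)
          have := arc_nonneg p (u 6 + 2 * θ 6)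
          unfold tgt; rw [he6]; split_ifs <;> linarith
        rw [he6]
        linarith
    have h9 := hmin L2 (by linarith)
    simp at h9
    omega
  · intro i hi hU
    have hc : (L.map Prod.fst).toFinset.card = 2 := by
      rw [hU, Finset.card_pair hi]
    rw [List.toFinset_card_of_nodup hnd, List.length_map, List.length_eq_two] at hc
    obtain ⟨e, f, rfl⟩ := hc
    have he : i ∈ ([e, f].map Prod.fst).toFinset := by rw [hU]; simp
    have h6 : (6 : Fin 7) ∈ ([e, f].map Prod.fst).toFinset := by rw [hU]; simp
    simp only [List.map_cons, List.map_nil, List.mem_toFinset, List.mem_cons,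
      List.not_mem_nil, or_false] at he h6
    simp only [W] at hL
    have n1 := arc_nonneg p (src u θ e)
    have n2 := arc_nonneg (tgt u θ e) (src u θ f)
    have n3 := arc_nonneg (tgt u θ f) q
    rcases h6 with h6 | h6
    · have h7 : f.1 = i := by
        rcases he with he | he
        · exact absurd (he.trans h6.symm) hi
        · exact he.symm
      refine ⟨src u θ e, ?_, Or.inl ?_⟩
      · unfold src; rw [← h6]; split_ifs <;> simp
      · rw [h6, ← h7]; linarith
    · have h7 : e.1 = i := by
        rcases he with he | he
        · exact he.symm
        · exact absurd (he.trans h6.symm) hi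
      refine ⟨tgt u θ f, ?_, Or.inr ?_⟩
      · unfold tgt; rw [← h6]; split_ifs <;> simp
      · rw [h6, ← h7]; linarith

/-! ### Geometry of a single covering shortcut -/

/-- length of a shortcut -/
noncomputable def aa (θ : Fin 7 → ℝ) (i : Fin 7) : ℝ := 2 * Real.sin (θ i)

/-- saving of a shortcut -/
noncomputable def ss (θ : Fin 7 → ℝ) (i : Fin 7) : ℝ := 2 * (θ i - Real.sin (θ i))

/-- All distances are smaller than `π/2+1`. -/
def SmallD (u θ : Fin 7 → ℝ) : Prop := ∀ p q, ∃ L, W u θ q p L < π / 2 + 1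

lemma two_arc {x g R : ℝ} {j k : ℤ} (h : |x - g + 2 * π * j| + |x + g + 2 * π * k| < R)
    (hR : |2 * g| ≤ 2 * π - R) : |x + 2 * π * j| < R / 2 ∧ |2 * g| < R := by
  have hpi := Real.pi_pos
  have h1 : |2 * g + 2 * π * ((k:ℝ) - j)| < R := by
    refine lt_of_le_of_lt ?_ h
    have := abs_sub (x + g + 2 * π * k) (x - g + 2 * π * j)
    rw [show 2 * g + 2 * π * ((k:ℝ) - j) = (x + g + 2 * π * k) - (x - g + 2 * π * j) by ring]
    linarith
  have hjk : k = j := by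
    by_contra hne
    have h2 : (1:ℝ) ≤ |(k:ℝ) - j| := by
      exact_mod_cast Int.one_le_abs (sub_ne_zero.mpr hne)
    have h3 : |2 * π * ((k:ℝ) - j)| = 2 * π * |(k:ℝ) - j| := by
      rw [abs_mul, abs_of_pos (show (0:ℝ) < 2 * π by positivity)]
    have h4 := abs_sub (2 * g + 2 * π * ((k:ℝ) - j)) (2 * g)
    rw [show 2 * g + 2 * π * ((k:ℝ) - j) - 2 * g = 2 * π * ((k:ℝ) - j) by ring] at h4
    nlinarith
  subst hjk
  simp only [sub_self, mul_zero, add_zero] at h1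
  refine ⟨?_, h1⟩
  have h5 := abs_add_le (x - g + 2 * π * k) (x + g + 2 * π * k)
  rw [show x - g + 2 * π * k + (x + g + 2 * π * k) = 2 * (x + 2 * π * k) by ring, abs_mul] at h5
  norm_num at h5
  linarith

lemma geo (hg : Good θ) (i : Fin 7) {h μ R : ℝ} (h0 : 0 ≤ h) (h1 : h ≤ π / 2 - 1)
    (hR : R ≤ π / 2 + 1)
    (hc : Cov u θ i R (μ - (π - h) / 2) (μ + (π - h) / 2)) :
    ((∃ k : ℤ, |μ - (u i + θ i) + 2 * π * k| < R / 2) ∧ π - h - 2 * θ i < R) ∨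
    ((∃ k : ℤ, |μ - (u i + θ i + π) + 2 * π * k| < R / 2) ∧ π + h - 2 * θ i < R) := by
  obtain ⟨ht0, ht1⟩ := hg i
  have hpi := Real.pi_pos
  rcases hc with hc | hc
  · left
    rw [arc_symm _ (μ + _)] at hc
    obtain ⟨j, hj⟩ := arc_attain (μ - (π - h) / 2) (u i)
    obtain ⟨k, hk⟩ := arc_attain (μ + (π - h) / 2) (u i + 2 * θ i)
    rw [hj, hk] at hc
    have := two_arc (x := μ - (u i + θ i)) (g := (π - h) / 2 - θ i) (j := j) (k := k) (R := R)
      (by convert hc using 3 <;> ring) (by rw [abs_le]; constructor <;> linarith)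
    refine ⟨⟨j, this.1⟩, ?_⟩
    have h2 := (abs_lt.mp this.2).2
    linarith
  · right
    rw [arc_symm _ (μ + _)] at hc
    obtain ⟨j, hj⟩ := arc_attain (μ - (π - h) / 2) (u i + 2 * θ i)
    obtain ⟨k, hk⟩ := arc_attain (μ + (π - h) / 2) (u i)
    rw [hj, hk, add_comm] at hc
    have := two_arc (x := μ - (u i + θ i + π)) (g := (π + h) / 2 - θ i) (j := k + 1) (k := j)
      (R := R)
      (by convert hc using 3 <;> push_cast <;> ring) (by rw [abs_le]; constructor <;> linarith)
    refine ⟨⟨k + 1, this.1⟩, ?_⟩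
    have h2 := (abs_lt.mp this.2).2
    linarith

/-! ### Measure -/

lemma circle_cover {ι : Type} [Fintype ι] (c r : ι → ℝ) (hr : ∀ i, 0 ≤ r i)
    (h : ∀ μ : ℝ, ∃ i, ∃ k : ℤ, |μ - c i + 2 * π * k| < r i / 2) : 2 * π ≤ ∑ i, r i := by
  have hpi := Real.pi_pos
  have : Fact (0 < 2 * π) := ⟨by positivity⟩
  have hcov : (Set.univ : Set (AddCircle (2 * π))) ⊆
      ⋃ i, Metric.closedBall ((c i : ℝ) : AddCircle (2 * π)) (r i / 2) := by
    intro x _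
    induction x using QuotientAddGroup.induction_on with
    | H μ =>
      obtain ⟨i, k, hk⟩ := h μ
      rw [Set.mem_iUnion]
      refine ⟨i, ?_⟩
      rw [Metric.mem_closedBall, dist_eq_norm]
      have e : ((μ : ℝ) : AddCircle (2 * π)) - ((c i : ℝ) : AddCircle (2 * π))
          = ((μ - c i + 2 * π * k : ℝ) : AddCircle (2 * π)) := by
        rw [AddCircle.coe_add, AddCircle.coe_sub]
        have : ((2 * π * k : ℝ) : AddCircle (2 * π)) = 0 := by
          rw [AddCircle.coe_eq_zero_iff]
          exact ⟨k, by simp [mul_comm]⟩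
        rw [this, add_zero]
      change ‖((μ : ℝ) : AddCircle (2 * π)) - ((c i : ℝ) : AddCircle (2 * π))‖ ≤ _
      rw [e]
      refine le_trans ?_ hk.le
      exact QuotientAddGroup.norm_mk_le_norm
  have hm := measure_mono (μ := (volume : Measure (AddCircle (2 * π)))) hcov
  have hm2 := hm.trans (measure_iUnion_fintype_le _ _)
  rw [AddCircle.measure_univ] at hm2
  have hm3 : ENNReal.ofReal (2 * π) ≤ ∑ i, ENNReal.ofReal (r i) := by
    refine hm2.trans (Finset.sum_le_sum fun i _ => ?_)
    rw [AddCircle.volume_closedBall]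
    apply ENNReal.ofReal_le_ofReal
    refine (min_le_right _ _).trans (le_of_eq (by ring))
  rw [← ENNReal.ofReal_sum_of_nonneg (fun i _ => hr i)] at hm3
  exact (ENNReal.ofReal_le_ofReal_iff (Finset.sum_nonneg fun i _ => hr i)).mp hm3

lemma line_cover {ι : Type} [Fintype ι] (l r : ι → ℝ) (hr : ∀ i, 0 ≤ r i) (x y : ℝ)
    (h : ∀ μ ∈ Set.Icc x y, ∃ i, l i ≤ μ ∧ μ ≤ l i + r i) : y - x ≤ ∑ i, r i := by
  have hcov : Set.Icc x y ⊆ ⋃ i, Set.Icc (l i) (l i + r i) := by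
    intro μ hμ
    obtain ⟨i, h1, h2⟩ := h μ hμ
    exact Set.mem_iUnion.mpr ⟨i, h1, h2⟩
  have hm := (measure_mono (μ := (volume : Measure ℝ)) hcov).trans (measure_iUnion_fintype_le _ _)
  simp only [Real.volume_Icc, add_sub_cancel_left] at hm
  rw [← ENNReal.ofReal_sum_of_nonneg (fun i _ => hr i)] at hm
  exact (ENNReal.ofReal_le_ofReal_iff (Finset.sum_nonneg fun i _ => hr i)).mp hm

lemma pair_arc {h : ℝ} (h0 : 0 ≤ h) (h1 : h ≤ π / 2 - 1) (μ : ℝ) :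
    arcDist (μ - (π - h) / 2) (μ + (π - h) / 2) = π - h := by
  have hpi := Real.pi_pos
  have e : |-(π - h)| = π - h := by rw [abs_neg, abs_of_nonneg]; linarith
  rw [arc_eq_of_le (t := -(π - h)) (by ring) (by rw [e]; linarith), e]

lemma level (hg : Good θ) (hS : SmallD u θ) (h : ℝ) (h0 : 0 ≤ h) (h1 : h ≤ π / 2 - 1)
    (A B : Fin 7 → ℝ) (hA : ∀ i, 0 ≤ A i ∧ A i ≤ π / 2 + 1) (hB : ∀ i, 0 ≤ B i ∧ B i ≤ π / 2 + 1)
    (H : ∀ U : Finset (Fin 7), U.Nonempty → ∑ j ∈ U, aa θ j < π / 2 + 1 → ∃ i ∈ U,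
      (π / 2 - 1 < h + ∑ j ∈ U, ss θ j →
        π / 2 + 1 - aa θ i + (∑ j ∈ U, ss θ j - ss θ i) ≤ A i) ∧
      (π / 2 - 1 + h < ∑ j ∈ U, ss θ j →
        π / 2 + 1 - aa θ i + (∑ j ∈ U, ss θ j - ss θ i) ≤ B i)) :
    2 * π ≤ ∑ i, A i + ∑ i, B i := by
  have := circle_cover (ι := Fin 7 ⊕ Fin 7)
    (Sum.elim (fun i => u i + θ i) (fun i => u i + θ i + π)) (Sum.elim A B)
    (by rintro (i | i)
        · exact (hA i).1
        · exact (hB i).1) ?_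
  · simpa using this
  intro μ
  obtain ⟨U, hU1, hU2, hU3, -, -⟩ := core hg _ _ _ (hS (μ - (π - h) / 2) (μ + (π - h) / 2))
  have hne : U.Nonempty := by
    rw [Finset.nonempty_iff_ne_empty]
    intro he
    have := hU2 he
    rw [pair_arc h0 h1] at this
    linarith
  obtain ⟨i, hi, hi1, hi2⟩ := H U hne hU1
  have hc := hU3 i hi
  have hsum : ∑ j ∈ U.erase i, 2 * (θ j - Real.sin (θ j)) = ∑ j ∈ U, ss θ j - ss θ i := by
    rw [← Finset.add_sum_erase U _ hi]; simp [ss]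
  rw [hsum] at hc
  set E := ∑ j ∈ U, ss θ j with hE
  have hs : ss θ i = 2 * θ i - aa θ i := by unfold ss aa; ring
  change Cov u θ i (π / 2 + 1 - aa θ i + (E - ss θ i)) _ _ at hc
  by_cases hcase : π / 2 - 1 < h + E
  · have hR := (hi1 hcase).trans (hA i).2
    rcases geo hg i h0 h1 hR hc with ⟨⟨k, hk⟩, h5⟩ | ⟨⟨k, hk⟩, h5⟩
    · exact ⟨Sum.inl i, k, by simp only [Sum.elim_inl]; linarith [hi1 hcase]⟩
    · exact ⟨Sum.inr i, k, by simp only [Sum.elim_inr]; linarith [hi2 (by linarith)]⟩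
  · exfalso
    rcases hc with hc | hc
    · have t1 := arc_tri (μ - (π - h) / 2) (u i) (μ + (π - h) / 2)
      have t2 := arc_tri (u i) (u i + 2 * θ i) (μ + (π - h) / 2)
      have t3 := arc_src_tgt u θ hg (i, true)
      simp only [src, tgt, if_true] at t3
      rw [pair_arc h0 h1] at t1
      linarith
    · have t1 := arc_tri (μ - (π - h) / 2) (u i + 2 * θ i) (μ + (π - h) / 2)
      have t2 := arc_tri (u i + 2 * θ i) (u i) (μ + (π - h) / 2)
      have t3 := arc_src_tgt u θ hg (i, true)
      simp only [src, tgt, if_true] at t3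
      rw [arc_symm] at t3
      rw [pair_arc h0 h1] at t1
      linarith

/-! ### The special lemma at height `π/2-1` -/

lemma arc_ge {x y t : ℝ} (h1 : t ≤ x - y) (h2 : x - y ≤ 2 * π - t) : t ≤ arcDist x y := by
  have hpi := Real.pi_pos
  obtain ⟨n, hn⟩ := arc_attain x y
  rw [hn]
  rcases le_or_gt 0 n with h | h
  · have h3 : (0:ℝ) ≤ n := by exact_mod_cast h
    have := le_abs_self (x - y + 2 * π * n)
    nlinarith
  · have h3 : (n:ℝ) ≤ -1 := by exact_mod_cast (by omega : n ≤ -1)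
    have := neg_le_abs (x - y + 2 * π * n)
    nlinarith

lemma two_arg (θ : Fin 7 → ℝ) (i) : 2 * θ i = aa θ i + ss θ i := by unfold aa ss; ring

lemma aa_pos (hg : Good θ) (i) : 0 < aa θ i := by
  have := hg.sin_pos i; unfold aa; linarith

lemma ss_pos (hg : Good θ) (i) : 0 < ss θ i := by
  have := hg.sin_lt i; unfold ss; linarith

lemma ss_le (hg : Good θ) (i) : ss θ i ≤ π - 2 := by
  have hpi := Real.pi_gt_three
  obtain ⟨h0, h1⟩ := hg i
  have h2 := Real.mul_le_sin h0.le h1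
  have h3 : 2 / π * θ i * π = 2 * θ i := by field_simp
  have h4 : 2 * θ i ≤ Real.sin (θ i) * π := by
    rw [← h3]; exact mul_le_mul_of_nonneg_right h2 (by linarith)
  have h5 : 0 ≤ (π / 2 - θ i) * (π - 2) := mul_nonneg (by linarith) (by linarith)
  unfold ss
  nlinarith

lemma U_struct (hg : Good θ) (h13 : ∀ i, i ≠ 6 → 1.3 < aa θ i) {U : Finset (Fin 7)}
    (hU : ∑ j ∈ U, aa θ j < π / 2 + 1) {i} (hi : i ∈ U) (h6 : i ≠ 6) :
    U = {i} ∨ (U = {i, 6} ∧ aa θ i + aa θ 6 < π / 2 + 1) := by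
  have hpi := Real.pi_lt_d2
  have hsub : ∀ j ∈ U, j ≠ 6 → j = i := by
    intro j hj hj6
    by_contra hne
    have h1 : ∑ k ∈ {j, i}, aa θ k ≤ ∑ k ∈ U, aa θ k :=
      Finset.sum_le_sum_of_subset_of_nonneg (by
        intro x hx; simp at hx; rcases hx with rfl | rfl <;> assumption)
        (fun k _ _ => (aa_pos hg k).le)
    rw [Finset.sum_pair hne] at h1
    have := h13 j hj6
    have := h13 i h6
    linarith
  by_cases h : (6 : Fin 7) ∈ U
  · right
    have e : U = {i, 6} := by
      ext x; simp only [Finset.mem_insert, Finset.mem_singleton]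
      constructor
      · intro hx
        by_cases hx6 : x = 6
        · exact Or.inr hx6
        · exact Or.inl (hsub x hx hx6)
      · rintro (rfl | rfl) <;> assumption
    refine ⟨e, ?_⟩
    rw [e, Finset.sum_pair h6] at hU
    exact hU
  · left
    ext x; simp only [Finset.mem_singleton]
    constructor
    · intro hx; exact hsub x hx (by rintro rfl; exact h hx)
    · rintro rfl; exact hi

lemma special (hg : Good θ) (hS : SmallD u θ) (h13 : ∀ i, i ≠ 6 → 1.3 < aa θ i)
    (hb : aa θ 6 < 0.72) (hk : ∀ i, ss θ 6 ≤ aa θ i) (R : Fin 7 → ℝ) (g : ℝ) (hg0 : 0 ≤ g)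
    (hR6 : R 6 = 0)
    (hR : ∀ i, i ≠ 6 → π / 2 + 1 - aa θ i ≤ R i ∧
      (aa θ i + aa θ 6 < π / 2 + 1 → π / 2 + 1 - aa θ i + ss θ 6 ≤ R i) ∧ g ≤ R i ∧ R i ≤ 1)
    (hgap : ∀ i, i ≠ 6 → π - 2 < ss θ i + ss θ 6 → aa θ i + aa θ 6 < π / 2 + 1 →
      π / 2 + 1 - aa θ i + ss θ 6 / 2 ≤ g) :
    2 * π - (π / 2 + 1) + aa θ 6 ≤ ∑ i, R i := by
  have hpi1 := Real.pi_gt_d2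
  have hpi2 := Real.pi_lt_d2
  have hb0 := aa_pos hg 6
  have hs0 := ss_pos hg 6
  have h2t := two_arg θ 6
  have hk6 := hk 6
  have hh0 : (0:ℝ) ≤ π / 2 - 1 := by linarith
  have hhalf : (π - (π / 2 - 1)) / 2 = (π / 2 + 1) / 2 := by ring
  set c6 := u 6 + θ 6 with hc6
  set w0 := c6 + (π / 2 + 1 - aa θ 6) / 2 with hw0
  set w1 := c6 + 2 * π - (π / 2 + 1 - aa θ 6) / 2 with hw1
  have hsin : ∀ i, 2 * Real.sin (θ i) = aa θ i := fun i => rfl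
  have hsav : ∀ i, 2 * (θ i - Real.sin (θ i)) = ss θ i := fun i => rfl
  have hkap : θ 6 - Real.sin (θ 6) = ss θ 6 / 2 := by unfold ss; ring
  have hgeo : ∀ μ i R', R' ≤ π / 2 + 1 → Cov u θ i R' (μ - (π / 2 + 1) / 2) (μ + (π / 2 + 1) / 2) →
      (∃ k : ℤ, |μ - (u i + θ i) + 2 * π * k| < R' / 2) ∨
        π + (π / 2 - 1) - 2 * θ i < R' := by
    intro μ i R' hR' hc
    rcases geo hg i (h := π / 2 - 1) hh0 le_rfl hR' (by rw [hhalf]; exact hc) with h | h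
    · exact Or.inl h.1
    · exact Or.inr h.2
  have hpair : ∀ μ, arcDist (μ - (π / 2 + 1) / 2) (μ + (π / 2 + 1) / 2) = π / 2 + 1 := by
    intro μ
    have := pair_arc hh0 le_rfl μ
    rw [hhalf] at this
    linarith
  -- singletons
  have hone : ∀ μ i, i ≠ 6 → Cov u θ i (π / 2 + 1 - aa θ i) (μ - (π / 2 + 1) / 2)
      (μ + (π / 2 + 1) / 2) → ∃ k : ℤ, |μ - (u i + θ i) + 2 * π * k| < R i / 2 := by
    intro μ i hi hc
    have ha := aa_pos hg i
    rcases hgeo μ i _ (by linarith) hc with ⟨k, h⟩ | h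
    · exact ⟨k, by linarith [(hR i hi).1]⟩
    · have := ss_le hg i
      have := two_arg θ i
      linarith
  have hA1 : ∃ i, i ≠ 6 ∧ ∃ k : ℤ, |w0 - (u i + θ i) + 2 * π * k| < R i / 2 := by
    obtain ⟨U, hU1, hU2, hU3, hU4, -⟩ := core hg _ _ _
      (hS (w0 - (π / 2 + 1) / 2) (w0 + (π / 2 + 1) / 2))
    have hp : w0 - (π / 2 + 1) / 2 = u 6 + ss θ 6 / 2 := by
      simp only [hw0, hc6]; linarith
    have h6 : (6 : Fin 7) ∉ U := by
      refine hU4 (fun i => hk i) ?_ ?_ ?_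
      · rw [hkap, hp]; exact arc_ge (by linarith) (by linarith)
      · rw [hkap, hp, arc_symm]; exact arc_ge (by linarith) (by linarith)
      · rw [hp]
        have t1 := arc_le_abs (u 6 + ss θ 6 / 2) (u 6)
        have t2 := arc_le_abs (u 6 + ss θ 6 / 2) (u 6 + 2 * θ 6)
        rw [abs_of_nonneg (by linarith)] at t1
        rw [abs_of_nonpos (by linarith)] at t2
        linarith
    have hne : U.Nonempty := by
      rw [Finset.nonempty_iff_ne_empty]
      intro he
      have := hU2 he
      rw [hpair] at this
      linarith
    obtain ⟨i, hi⟩ := hne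
    have hi6 : i ≠ 6 := by rintro rfl; exact h6 hi
    refine ⟨i, hi6, ?_⟩
    rcases U_struct hg h13 hU1 hi hi6 with h | ⟨h, -⟩
    · have := hU3 i hi
      rw [h] at this
      apply hone _ _ hi6
      simpa [hsin] using this
    · exact absurd (by rw [h]; simp) h6
  have hA2 : ∃ i, i ≠ 6 ∧ ∃ k : ℤ, |w1 - (u i + θ i) + 2 * π * k| < R i / 2 := by
    obtain ⟨U, hU1, hU2, hU3, hU4, -⟩ := core hg _ _ _
      (hS (w1 + (π / 2 + 1) / 2) (w1 - (π / 2 + 1) / 2))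
    have hp : w1 + (π / 2 + 1) / 2 = u 6 + 2 * θ 6 - ss θ 6 / 2 + 2 * π * ((1 : ℤ) : ℝ) := by
      simp only [hw1, hc6]; push_cast; linarith
    have hE : Eqv (w1 + (π / 2 + 1) / 2) (u 6 + 2 * θ 6 - ss θ 6 / 2) := ⟨1, hp⟩
    have h6 : (6 : Fin 7) ∉ U := by
      refine hU4 (fun i => hk i) ?_ ?_ ?_
      · rw [hkap, arc_congr_left hE]; exact arc_ge (by linarith) (by linarith)
      · rw [hkap, arc_congr_left hE, arc_symm]; exact arc_ge (by linarith) (by linarith)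
      · rw [arc_congr_left hE, arc_congr_left hE]
        have t1 := arc_le_abs (u 6 + 2 * θ 6 - ss θ 6 / 2) (u 6)
        have t2 := arc_le_abs (u 6 + 2 * θ 6 - ss θ 6 / 2) (u 6 + 2 * θ 6)
        rw [abs_of_nonneg (by linarith)] at t1
        rw [abs_of_nonpos (by linarith)] at t2
        linarith
    have hne : U.Nonempty := by
      rw [Finset.nonempty_iff_ne_empty]
      intro he
      have := hU2 he
      rw [arc_symm, hpair] at this
      linarith
    obtain ⟨i, hi⟩ := hne
    have hi6 : i ≠ 6 := by rintro rfl; exact h6 hi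
    refine ⟨i, hi6, ?_⟩
    rcases U_struct hg h13 hU1 hi hi6 with h | ⟨h, -⟩
    · have := hU3 i hi
      rw [h] at this
      apply hone _ _ hi6
      apply Cov.symm
      simpa [hsin] using this
    · exact absurd (by rw [h]; simp) h6
  have hA3 : ∀ μ, w0 + g ≤ μ → μ ≤ w1 - g →
      ∃ i, i ≠ 6 ∧ ∃ k : ℤ, |μ - (u i + θ i) + 2 * π * k| < R i / 2 := by
    intro μ hμ0 hμ1
    obtain ⟨U, hU1, hU2, hU3, -, hU5⟩ := core hg _ _ _
      (hS (μ - (π / 2 + 1) / 2) (μ + (π / 2 + 1) / 2))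
    have hne : U.Nonempty := by
      rw [Finset.nonempty_iff_ne_empty]
      intro he
      have := hU2 he
      rw [hpair] at this
      linarith
    by_cases hex : ∃ i ∈ U, i ≠ 6
    · obtain ⟨i, hi, hi6⟩ := hex
      refine ⟨i, hi6, ?_⟩
      have hci := hU3 i hi
      rcases U_struct hg h13 hU1 hi hi6 with h | ⟨h, hlt⟩
      · rw [h] at hci
        apply hone _ _ hi6
        simpa [hsin] using hci
      · have he : U.erase i = {6} := by
          rw [h]; rw [Finset.erase_insert]; simpa using hi6
        rw [he, Finset.sum_singleton, hsav, hsin] at hci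
        have hRi := (hR i hi6).2.1 hlt
        rcases hgeo μ i _ (by linarith [(hR i hi6).2.2.2]) hci with ⟨k, hk'⟩ | hoff
        · exact ⟨k, by linarith⟩
        · exfalso
          have h2i := two_arg θ i
          have hgg := hgap i hi6 (by linarith) hlt
          obtain ⟨x, hx, hd⟩ := hU5 i hi6 h
          rw [hsin, hsin] at hd
          have e1 : g - aa θ 6 - ss θ 6 / 2 ≤ arcDist (μ - (π / 2 + 1) / 2) x := by
            rcases hx with rfl | rfl
            · exact arc_ge (by linarith) (by linarith [(hR i hi6).2.2])
            · exact arc_ge (by linarith) (by linarith [(hR i hi6).2.2])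
          have e2 : g - aa θ 6 - ss θ 6 / 2 ≤ arcDist x (μ + (π / 2 + 1) / 2) := by
            rw [arc_symm]
            rcases hx with rfl | rfl
            · exact arc_ge (by linarith) (by linarith [(hR i hi6).2.2])
            · exact arc_ge (by linarith) (by linarith [(hR i hi6).2.2])
          rcases hd with hd | hd <;> linarith
    · exfalso
      push Not at hex
      have hU : U = {6} := by
        ext x; simp only [Finset.mem_singleton]
        constructor
        · exact hex x
        · rintro rfl
          obtain ⟨y, hy⟩ := hne
          rwa [← hex y hy]
      have hc := hU3 6 (by rw [hU]; simp)
      rw [hU] at hc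
      have hc' : Cov u θ 6 (π / 2 + 1 - aa θ 6) (μ - (π / 2 + 1) / 2) (μ + (π / 2 + 1) / 2) := by
        simpa [hsin] using hc
      rcases hgeo μ 6 _ (by linarith) hc' with ⟨k, hk'⟩ | hoff
      · rw [abs_lt] at hk'
        rcases le_or_gt 0 k with h | h
        · have h3 : (0:ℝ) ≤ k := by exact_mod_cast h
          nlinarith
        · have h3 : (k:ℝ) ≤ -1 := by exact_mod_cast (by omega : k ≤ -1)
          nlinarith
      · have := ss_le hg 6
        linarith
  -- uniqueness of lifts
  have huniq : ∀ i, i ≠ 6 → ∀ μ ν : ℝ, ∀ j k : ℤ, w0 ≤ μ → μ ≤ w1 → w0 ≤ ν → ν ≤ w1 →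
      |μ - (u i + θ i) + 2 * π * j| < R i / 2 → |ν - (u i + θ i) + 2 * π * k| < R i / 2 →
      j = k := by
    intro i hi μ ν j k m0 m1 n0 n1 hj hk'
    have hR1 := (hR i hi).2.2.2
    rw [abs_lt] at hj hk'
    rcases lt_trichotomy j k with h | h | h
    · exfalso
      have h3 : (j:ℝ) + 1 ≤ k := by exact_mod_cast h
      nlinarith
    · exact h
    · exfalso
      have h3 : (k:ℝ) + 1 ≤ j := by exact_mod_cast h
      nlinarith
  have hw01 : w0 ≤ w1 := by simp only [hw0, hw1]; linarith
  obtain ⟨i1, hi1, k1, hk1⟩ := hA1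
  obtain ⟨i2, hi2, k2, hk2⟩ := hA2
  have hne12 : i1 ≠ i2 := by
    rintro rfl
    have := huniq i1 hi1 w0 w1 k1 k2 le_rfl hw01 hw01 le_rfl hk1 hk2
    subst this
    have hR1 := (hR i1 hi1).2.2.2
    rw [abs_lt] at hk1 hk2
    linarith
  have hK : ∀ i : Fin 7, ∃ k : ℤ, ∀ μ, w0 ≤ μ → μ ≤ w1 → i ≠ 6 → ∀ j : ℤ,
      |μ - (u i + θ i) + 2 * π * j| < R i / 2 → j = k := by
    intro i
    by_cases h : ∃ μ, w0 ≤ μ ∧ μ ≤ w1 ∧ i ≠ 6 ∧ ∃ j : ℤ, |μ - (u i + θ i) + 2 * π * j| < R i / 2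
    · obtain ⟨μ, m0, m1, hi, j, hj⟩ := h
      exact ⟨j, fun ν n0 n1 _ j' hj' => huniq i hi ν μ j' j n0 n1 m0 m1 hj' hj⟩
    · exact ⟨0, fun μ m0 m1 hi j hj => absurd ⟨μ, m0, m1, hi, j, hj⟩ h⟩
  choose K hK using hK
  have hR0 : ∀ i, 0 ≤ R i := by
    intro i
    by_cases hi : i = 6
    · rw [hi, hR6]
    · exact hg0.trans (hR i hi).2.2.1
  have := line_cover (fun i => if i = i1 then w0 else if i = i2 then w1 - R i else
    u i + θ i - 2 * π * K i - R i / 2) R hR0 w0 w1 ?_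
  · simp only [hw0, hw1] at this; linarith
  rintro μ ⟨m0, m1⟩
  by_cases hc0 : μ < w0 + g
  · refine ⟨i1, ?_⟩
    simp only [if_true]
    exact ⟨m0, by linarith [(hR i1 hi1).2.2.1]⟩
  by_cases hc1 : w1 - g < μ
  · refine ⟨i2, ?_⟩
    simp only [if_true, if_neg hne12.symm]
    exact ⟨by linarith [(hR i2 hi2).2.2.1], by linarith⟩
  push Not at hc0 hc1
  obtain ⟨i, hi, k, hk'⟩ := hA3 μ hc0 hc1
  refine ⟨i, ?_⟩
  have hkK := hK i μ m0 m1 hi k hk'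
  by_cases e1 : i = i1
  · subst e1
    have := hK i w0 le_rfl hw01 hi k1 hk1
    rw [this] at hk1
    rw [hkK] at hk'
    rw [abs_lt] at hk1 hk'
    simp only [if_true]
    constructor <;> linarith
  by_cases e2 : i = i2
  · subst e2
    have := hK i w1 hw01 le_rfl hi k2 hk2
    rw [this] at hk2
    rw [hkK] at hk'
    rw [abs_lt] at hk2 hk'
    simp only [if_true, if_neg e1]
    constructor <;> linarith
  · simp only [if_neg e1, if_neg e2]
    rw [hkK] at hk'
    rw [abs_lt] at hk'
    constructor <;> linarith

/-! ### Numerical estimates -/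

lemma aa_le_two (θ : Fin 7 → ℝ) (i) : aa θ i ≤ 2 := by
  have := Real.sin_le_one (θ i); unfold aa; linarith

lemma big (hg : Good θ) {i : Fin 7} {X : ℝ} (r : ℝ) (ha : aa θ i ≤ X) (hr : 0 ≤ r)
    (hX : r ^ 2 ≤ 2 - X) : ss θ i ≤ π - 2 - 2 * r + r ^ 2 := by
  obtain ⟨h0, h1⟩ := hg i
  have hy0 : 0 ≤ π / 2 - θ i := by linarith
  have hc : Real.sin (θ i) = Real.cos (π / 2 - θ i) := (Real.cos_pi_div_two_sub _).symm
  have hs : ss θ i = π - 2 * (π / 2 - θ i) - 2 * Real.cos (π / 2 - θ i) := by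
    unfold ss; rw [hc]; ring
  have ha' : 2 * Real.cos (π / 2 - θ i) ≤ X := by rw [← hc]; exact ha
  generalize π / 2 - θ i = y at *
  have h3 := Real.one_sub_sq_div_two_le_cos (x := y)
  have hry : r ≤ y := by
    by_contra hlt
    push Not at hlt
    nlinarith
  have h4 := Real.one_sub_sq_div_two_le_cos (x := r)
  have h5 := Real.cos_sub_cos r y
  have h6 : Real.cos r - Real.cos y ≤ y - r := by
    have e : Real.cos r - Real.cos y = 2 * (Real.sin ((r + y) / 2) * Real.sin ((y - r) / 2)) := by
      rw [h5, show (r - y) / 2 = -((y - r) / 2) by ring, Real.sin_neg]; ring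
    have h7 : Real.sin ((y - r) / 2) ≤ (y - r) / 2 := Real.sin_le (by linarith)
    have h8 : |Real.sin ((r + y) / 2) * Real.sin ((y - r) / 2)| ≤ (y - r) / 2 := by
      rw [abs_mul]
      have h9 := Real.abs_sin_le_one ((r + y) / 2)
      have h10 : |Real.sin ((y - r) / 2)| ≤ (y - r) / 2 := by
        have := Real.abs_sin_le_abs (x := (y - r) / 2)
        rwa [abs_of_nonneg (show 0 ≤ (y - r) / 2 by linarith)] at this
      nlinarith [abs_nonneg (Real.sin ((y - r) / 2))]
    have := le_abs_self (Real.sin ((r + y) / 2) * Real.sin ((y - r) / 2))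
    linarith
  linarith

lemma small (hg : Good θ) {i : Fin 7} {X : ℝ} (Θ k : ℝ) (ha : aa θ i ≤ X) (h0 : 0 < Θ)
    (h1 : Θ ≤ 1) (hX : X / 2 ≤ Θ - Θ ^ 3 / 6) (hk : 1 ≤ (1 + k) * (1 - Θ ^ 2 / 6)) :
    ss θ i ≤ k * aa θ i := by
  obtain ⟨g0, g1⟩ := hg i
  have hpi := Real.pi_gt_three
  have hle : θ i ≤ Θ := by
    by_contra hlt
    push Not at hlt
    have h2 := Real.sin_lt_sin_of_lt_of_le_pi_div_two (by linarith) g1 hlt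
    have h3 := Real.sin_ge_sub_cube h0.le
    unfold aa at ha
    linarith
  have h4 := Real.sin_ge_sub_cube g0.le
  have hsq : θ i ^ 2 ≤ Θ ^ 2 := by
    apply pow_le_pow_left₀ g0.le hle
  have h5 : θ i * (1 - Θ ^ 2 / 6) ≤ Real.sin (θ i) := by nlinarith
  have hpos : 0 < 1 - Θ ^ 2 / 6 := by nlinarith
  have hk1 : 0 < 1 + k := by
    by_contra hneg
    push Not at hneg
    nlinarith
  have h6 : θ i ≤ (1 + k) * Real.sin (θ i) := by
    calc θ i = θ i * 1 := by ring
      _ ≤ θ i * ((1 + k) * (1 - Θ ^ 2 / 6)) := by gcongr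
      _ = (1 + k) * (θ i * (1 - Θ ^ 2 / 6)) := by ring
      _ ≤ _ := by gcongr
  unfold ss aa
  linarith

lemma rest (hg : Good θ) (T : Finset (Fin 7)) {X : ℝ} (Θ k : ℝ) (hT : ∑ j ∈ T, aa θ j ≤ X)
    (h0 : 0 < Θ)
    (h1 : Θ ≤ 1) (hX : X / 2 ≤ Θ - Θ ^ 3 / 6) (hk : 1 ≤ (1 + k) * (1 - Θ ^ 2 / 6))
    (hk0 : 0 ≤ k) :
    ∑ j ∈ T, ss θ j ≤ k * X := by
  calc ∑ j ∈ T, ss θ j ≤ ∑ j ∈ T, k * aa θ j := by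
        refine Finset.sum_le_sum fun j hj => small hg Θ k ?_ h0 h1 hX hk
        exact (Finset.single_le_sum (fun l _ => (aa_pos hg l).le) hj).trans hT
    _ = k * ∑ j ∈ T, aa θ j := by rw [Finset.mul_sum]
    _ ≤ k * X := by gcongr

/-- Short combinations save little. -/
lemma claim0 (hg : Good θ) (U : Finset (Fin 7)) (h : ∀ i ∈ U, aa θ i ≤ 1.86)
    (hU : ∑ j ∈ U, aa θ j < π / 2 + 1) : ∑ j ∈ U, ss θ j ≤ π / 2 - 1 := by
  have hpi1 := Real.pi_gt_d6
  have hpi2 := Real.pi_lt_d6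
  by_cases hex : ∃ i ∈ U, 1.5 < aa θ i
  · obtain ⟨i, hi, hi1⟩ := hex
    have e1 := Finset.add_sum_erase U (aa θ) hi
    have e2 := Finset.add_sum_erase U (ss θ) hi
    by_cases h2 : aa θ i ≤ 1.75
    · have h3 := big hg 0.5 h2 (by norm_num) (by norm_num)
      have h4 := rest hg (U.erase i) (X := 1.0708) 0.5656 0.0564 (by linarith) (by norm_num)
        (by norm_num) (by norm_num) (by norm_num) (by norm_num)
      linarith
    · have h3 := big hg 0.374 (h i hi) (by norm_num) (by norm_num)
      have h4 := rest hg (U.erase i) (X := 0.8208) 0.4235 0.031 (by linarith) (by norm_num)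
        (by norm_num) (by norm_num) (by norm_num) (by norm_num)
      linarith
  · push Not at hex
    have : ∑ j ∈ U, ss θ j ≤ ∑ j ∈ U, 0.1384 * aa θ j := by
      refine Finset.sum_le_sum fun j hj => small hg (X := 1.5) 0.854 0.1384 (hex j hj)
        (by norm_num) (by norm_num) (by norm_num) (by norm_num)
    rw [← Finset.mul_sum] at this
    linarith

lemma aa_anti (hg : Good θ) (hm : Antitone θ) : Antitone (aa θ) := by
  intro i j hij
  have h1 := hm hij
  have h2 := hg i
  have h3 := hg j
  unfold aa
  have := Real.sin_le_sin_of_le_of_le_pi_div_two (by linarith [Real.pi_pos]) h2.2 h1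
  linarith

lemma step0 (hg : Good θ) (hm : Antitone θ) (hS : SmallD u θ) : 1.86 < aa θ 4 := by
  by_contra hcon
  push Not at hcon
  have hpi1 := Real.pi_gt_d6
  have hpi2 := Real.pi_lt_d6
  have hlast : ∀ i : Fin 7, ¬ i < 4 → aa θ i ≤ 1.86 := fun i hi =>
    (aa_anti hg hm (not_lt.mp hi)).trans hcon
  have := level hg hS 0 le_rfl (by linarith) (fun i => if i < 4 then 0.728 else 0)
    (fun i => if i < 4 then 0.728 else 0)
    (by intro i; split_ifs <;> constructor <;> linarith)
    (by intro i; split_ifs <;> constructor <;> linarith) ?_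
  · simp [Fin.sum_univ_succ, Fin.lt_def] at this
    norm_num at this
    linarith
  intro U hne hU
  by_cases hex : ∃ i ∈ U, 1.86 < aa θ i
  · obtain ⟨i, hi, hi1⟩ := hex
    have hi4 : i < 4 := by
      by_contra hh
      linarith [hlast i hh]
    have e1 := Finset.add_sum_erase U (aa θ) hi
    have e2 := Finset.add_sum_erase U (ss θ) hi
    have h4 := rest hg (U.erase i) (X := 0.7108) 0.3638 0.0226 (by linarith) (by norm_num)
        (by norm_num) (by norm_num) (by norm_num) (by norm_num)
    refine ⟨i, hi, fun _ => ?_, fun _ => ?_⟩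
    · simp only [if_pos hi4]; linarith
    · simp only [if_pos hi4]; linarith
  · push Not at hex
    have := claim0 hg U hex hU
    obtain ⟨i, hi⟩ := hne
    exact ⟨i, hi, fun h => by linarith, fun h => by linarith⟩

/-! ### Levels once the first five shortcuts are long -/

/-- possible additional savings -/
def Sig (θ : Fin 7 → ℝ) (i : Fin 7) (σ : ℝ) : Prop :=
  σ = 0 ∨ (σ = ss θ 5 ∧ aa θ i + aa θ 5 < π / 2 + 1) ∨ (σ = ss θ 6 ∧ aa θ i + aa θ 6 < π / 2 + 1) ∨
    (σ = ss θ 5 + ss θ 6 ∧ aa θ i + aa θ 5 + aa θ 6 < π / 2 + 1)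

lemma U_enum (hg : Good θ) (hL : ∀ i : Fin 7, i < 5 → 1.86 < aa θ i) (U : Finset (Fin 7))
    (hne : U.Nonempty) (hU : ∑ j ∈ U, aa θ j < π / 2 + 1) :
    (∃ i ∈ U, i < 5 ∧ ∃ σ, Sig θ i σ ∧ ∑ j ∈ U, ss θ j = ss θ i + σ) ∨ U = {5} ∨ U = {6} ∨
      (U = {5, 6} ∧ aa θ 5 + aa θ 6 < π / 2 + 1) := by
  have hpi2 := Real.pi_lt_d6
  by_cases hex : ∃ i ∈ U, i < 5
  · left
    obtain ⟨i, hi, hi5⟩ := hex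
    refine ⟨i, hi, hi5, ?_⟩
    have hsub : ∀ j ∈ U, j < 5 → j = i := by
      intro j hj hj6
      by_contra hne
      have h1 : ∑ k ∈ {j, i}, aa θ k ≤ ∑ k ∈ U, aa θ k :=
        Finset.sum_le_sum_of_subset_of_nonneg (by
          intro x hx; simp at hx; rcases hx with rfl | rfl <;> assumption)
          (fun k _ _ => (aa_pos hg k).le)
      rw [Finset.sum_pair hne] at h1
      have := hL j hj6
      have := hL i hi5
      linarith
    have hsub' : ∀ j ∈ U, j = i ∨ j = 5 ∨ j = 6 := by
      intro j hj
      by_cases h : j < 5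
      · exact Or.inl (hsub j hj h)
      · right; omega
    have hi5' : i ≠ 5 := by omega
    have hi6' : i ≠ 6 := by omega
    by_cases h5 : (5 : Fin 7) ∈ U <;> by_cases h6 : (6 : Fin 7) ∈ U
    · have e : U = {i, 5, 6} := by
        ext x; simp only [Finset.mem_insert, Finset.mem_singleton]
        exact ⟨hsub' x, by rintro (rfl | rfl | rfl) <;> assumption⟩
      have es : ∀ f : Fin 7 → ℝ, ∑ j ∈ U, f j = f i + (f 5 + f 6) := by
        intro f
        rw [e, Finset.sum_insert (by simp [hi5', hi6']), Finset.sum_pair (by decide)]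
      rw [es] at hU
      exact ⟨ss θ 5 + ss θ 6, Or.inr (Or.inr (Or.inr ⟨rfl, by linarith⟩)), es _⟩
    · have e : U = {i, 5} := by
        ext x; simp only [Finset.mem_insert, Finset.mem_singleton]
        refine ⟨fun hx => ?_, by rintro (rfl | rfl) <;> assumption⟩
        rcases hsub' x hx with h | h | rfl
        · exact Or.inl h
        · exact Or.inr h
        · exact absurd hx h6
      have es : ∀ f : Fin 7 → ℝ, ∑ j ∈ U, f j = f i + f 5 := by
        intro f
        rw [e, Finset.sum_pair hi5']
      rw [es] at hU
      exact ⟨ss θ 5, Or.inr (Or.inl ⟨rfl, hU⟩), es _⟩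
    · have e : U = {i, 6} := by
        ext x; simp only [Finset.mem_insert, Finset.mem_singleton]
        refine ⟨fun hx => ?_, by rintro (rfl | rfl) <;> assumption⟩
        rcases hsub' x hx with h | rfl | h
        · exact Or.inl h
        · exact absurd hx h5
        · exact Or.inr h
      have es : ∀ f : Fin 7 → ℝ, ∑ j ∈ U, f j = f i + f 6 := by
        intro f
        rw [e, Finset.sum_pair hi6']
      rw [es] at hU
      exact ⟨ss θ 6, Or.inr (Or.inr (Or.inl ⟨rfl, hU⟩)), es _⟩
    · have e : U = {i} := by
        ext x; simp only [Finset.mem_singleton]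
        refine ⟨fun hx => ?_, by rintro rfl; assumption⟩
        rcases hsub' x hx with h | rfl | rfl
        · exact h
        · exact absurd hx h5
        · exact absurd hx h6
      exact ⟨0, Or.inl rfl, by rw [e]; simp⟩
  · right
    push Not at hex
    have hsub' : ∀ j ∈ U, j = 5 ∨ j = 6 := by
      intro j hj
      have := hex j hj
      omega
    by_cases h5 : (5 : Fin 7) ∈ U <;> by_cases h6 : (6 : Fin 7) ∈ U
    · have e : U = {5, 6} := by
        ext x; simp only [Finset.mem_insert, Finset.mem_singleton]
        exact ⟨hsub' x, by rintro (rfl | rfl) <;> assumption⟩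
      right; right
      refine ⟨e, ?_⟩
      rwa [e, Finset.sum_pair (by decide)] at hU
    · left
      ext x; simp only [Finset.mem_singleton]
      refine ⟨fun hx => ?_, by rintro rfl; assumption⟩
      rcases hsub' x hx with h | rfl
      · exact h
      · exact absurd hx h6
    · right; left
      ext x; simp only [Finset.mem_singleton]
      refine ⟨fun hx => ?_, by rintro rfl; assumption⟩
      rcases hsub' x hx with rfl | h
      · exact absurd hx h5
      · exact h
    · exfalso
      obtain ⟨x, hx⟩ := hne
      rcases hsub' x hx with rfl | rfl <;> contradiction

lemma levelL (hg : Good θ) (hm : Antitone θ) (hS : SmallD u θ) (h4 : 1.86 < aa θ 4)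
    (h r ρ Rd Rs A5 A6 : ℝ)
    (h0 : 0 ≤ h) (h1 : h ≤ π / 2 - 1) (hr0 : 0 ≤ r)
    (hr : π - 2 - 2 * r + r ^ 2 + ρ ≤ π / 2 - 1 + h)
    (hRd : 0 ≤ Rd ∧ Rd ≤ 1) (hRs : 0 ≤ Rs ∧ Rs ≤ 2 * Rd) (hA5 : 0 ≤ A5 ∧ A5 ≤ π / 2 + 1)
    (hA6 : 0 ≤ A6 ∧ A6 ≤ π / 2 + 1)
    (hρ : ∀ i σ, i < 5 → Sig θ i σ → σ ≤ ρ)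
    (hd : ∀ i σ, i < 5 → Sig θ i σ → 2 - r ^ 2 < aa θ i → π / 2 + 1 - aa θ i + σ ≤ Rd)
    (hs : ∀ i σ, i < 5 → Sig θ i σ → aa θ i ≤ 2 - r ^ 2 → π / 2 - 1 < h + ss θ i + σ →
      π / 2 + 1 - aa θ i + σ ≤ Rs)
    (H5 : (π / 2 - 1 < h + ss θ 5 → π / 2 + 1 - aa θ 5 ≤ A5) ∧ ss θ 5 ≤ π / 2 - 1 + h)
    (H6 : (π / 2 - 1 < h + ss θ 6 → π / 2 + 1 - aa θ 6 ≤ A6) ∧ ss θ 6 ≤ π / 2 - 1 + h)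
    (H56 : aa θ 5 + aa θ 6 < π / 2 + 1 → ss θ 5 + ss θ 6 ≤ π / 2 - 1 + h ∧
      (π / 2 - 1 < h + ss θ 5 + ss θ 6 → π / 2 + 1 - aa θ 5 + ss θ 6 ≤ A5 ∨
        π / 2 + 1 - aa θ 6 + ss θ 5 ≤ A6)) :
    2 * π ≤ 10 * Rd + A5 + A6 ∧ (aa θ 4 ≤ 2 - r ^ 2 → 2 * π ≤ 8 * Rd + Rs + A5 + A6) := by
  have hpi := Real.pi_gt_d6
  have hanti := aa_anti hg hm
  have hL : ∀ i : Fin 7, i < 5 → 1.86 < aa θ i := fun i hi =>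
    lt_of_lt_of_le h4 (hanti (by omega))
  set A : Fin 7 → ℝ := fun i => if i = 5 then A5 else if i = 6 then A6 else
    if 2 - r ^ 2 < aa θ i then Rd else Rs with hA
  set B : Fin 7 → ℝ := fun i => if i = 5 then 0 else if i = 6 then 0 else
    if 2 - r ^ 2 < aa θ i then Rd else 0 with hB
  have key := level hg hS h h0 h1 A B
    (by intro i; simp only [hA]; split_ifs <;> constructor <;> linarith)
    (by intro i; simp only [hB]; split_ifs <;> constructor <;> linarith) ?_
  · have hsum : ∑ i, A i + ∑ i, B i = (A 0 + B 0) + (A 1 + B 1) + (A 2 + B 2) + (A 3 + B 3) +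
        (A 4 + B 4) + A5 + A6 := by
      have e1 : A 5 = A5 := by simp [hA]
      have e2 : A 6 = A6 := by simp [hA]
      have e3 : B 5 = 0 := by simp [hB]
      have e4 : B 6 = 0 := by simp [hB]
      rw [Fin.sum_univ_seven, Fin.sum_univ_seven, e1, e2, e3, e4]; ring
    have hb : ∀ i : Fin 7, i < 5 → A i + B i ≤ 2 * Rd := by
      intro i hi
      simp only [hA, hB, if_neg (show i ≠ 5 by omega), if_neg (show i ≠ 6 by omega)]
      split_ifs <;> linarith
    have b0 := hb 0 (by decide)
    have b1 := hb 1 (by decide)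
    have b2 := hb 2 (by decide)
    have b3 := hb 3 (by decide)
    have b4 := hb 4 (by decide)
    refine ⟨by linarith, fun h4' => ?_⟩
    have : A 4 + B 4 ≤ Rs := by
      simp only [hA, hB, if_neg (show (4 : Fin 7) ≠ 5 by decide),
        if_neg (show (4 : Fin 7) ≠ 6 by decide), if_neg (not_lt.mpr h4')]
      linarith
    linarith
  intro U hne hU
  rcases U_enum hg hL U hne hU with ⟨i, hi, hi5, σ, hσ, hsum⟩ | hU5 | hU6 | ⟨hU56, hlt⟩
  · refine ⟨i, hi, ?_⟩
    rw [hsum]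
    simp only [hA, hB, if_neg (show i ≠ 5 by omega), if_neg (show i ≠ 6 by omega)]
    have hσρ := hρ i σ hi5 hσ
    by_cases hdb : 2 - r ^ 2 < aa θ i
    · simp only [if_pos hdb]
      have := hd i σ hi5 hσ hdb
      exact ⟨fun _ => by linarith, fun _ => by linarith⟩
    · simp only [if_neg hdb]
      push Not at hdb
      have hbg := big hg r hdb hr0 (by linarith)
      refine ⟨fun hh => ?_, fun hh => by linarith⟩
      have := hs i σ hi5 hσ hdb (by linarith)
      linarith
  · refine ⟨5, by rw [hU5]; simp, ?_⟩
    rw [hU5, Finset.sum_singleton]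
    simp only [hA, hB, if_true]
    exact ⟨fun hh => by linarith [H5.1 hh], fun hh => by linarith [H5.2]⟩
  · refine ⟨6, by rw [hU6]; simp, ?_⟩
    rw [hU6, Finset.sum_singleton]
    simp only [hA, hB, if_true, if_neg (show (6 : Fin 7) ≠ 5 by decide)]
    exact ⟨fun hh => by linarith [H6.1 hh], fun hh => by linarith [H6.2]⟩
  · obtain ⟨q1, q2⟩ := H56 hlt
    rw [hU56, Finset.sum_pair (by decide)]
    by_cases hc : π / 2 - 1 < h + ss θ 5 + ss θ 6
    · rcases q2 hc with q | q
      · refine ⟨5, by simp, ?_⟩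
        simp only [hA, hB, if_true]
        exact ⟨fun hh => by linarith, fun hh => by linarith⟩
      · refine ⟨6, by simp, ?_⟩
        simp only [hA, hB, if_true, if_neg (show (6 : Fin 7) ≠ 5 by decide)]
        exact ⟨fun hh => by linarith, fun hh => by linarith⟩
    · exact ⟨5, by simp, fun hh => by linarith, fun hh => by linarith⟩

/-! ### The case analysis -/

lemma sig_zero (h4 : 1.86 < aa θ 4) (hg : Good θ) (hm : Antitone θ) (hb : 0.72 ≤ aa θ 6) :
    ∀ i σ, i < 5 → Sig θ i σ → σ = 0 := by
  intro i σ hi hσ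
  have hpi := Real.pi_lt_d6
  have hanti := aa_anti hg hm
  have h1 : aa θ 4 ≤ aa θ i := hanti (by omega)
  have h2 : aa θ 6 ≤ aa θ 5 := hanti (by decide)
  rcases hσ with h | ⟨_, h⟩ | ⟨_, h⟩ | ⟨_, h⟩
  · exact h
  all_goals exfalso; linarith

lemma sig_small (h4 : 1.86 < aa θ 4) (hg : Good θ) (hm : Antitone θ) :
    ∀ i σ, i < 5 → Sig θ i σ → σ ≤ 0.0161 := by
  intro i σ hi hσ
  have hpi := Real.pi_lt_d6
  have hanti := aa_anti hg hm
  have h1 : aa θ 4 ≤ aa θ i := hanti (by omega)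
  have hrest : ∀ T : Finset (Fin 7), ∑ j ∈ T, aa θ j ≤ 0.7108 → ∑ j ∈ T, ss θ j ≤ 0.0161 := by
    intro T hT
    have := rest hg T 0.3638 0.0226 hT (by norm_num)
        (by norm_num) (by norm_num) (by norm_num) (by norm_num)
    linarith
  rcases hσ with h | ⟨h', h⟩ | ⟨h', h⟩ | ⟨h', h⟩
  · linarith
  · have := hrest {5} (by rw [Finset.sum_singleton]; linarith)
    rw [Finset.sum_singleton] at this; linarith
  · have := hrest {6} (by rw [Finset.sum_singleton]; linarith)
    rw [Finset.sum_singleton] at this; linarith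
  · have := hrest {5, 6} (by rw [Finset.sum_pair (by decide)]; linarith)
    rw [Finset.sum_pair (by decide)] at this; linarith

lemma sig_six (h4 : 1.86 < aa θ 4) (hg : Good θ) (hm : Antitone θ) (h5 : 1.62 < aa θ 5) :
    ∀ i σ, i < 5 → Sig θ i σ → σ = 0 ∨ (σ = ss θ 6 ∧ aa θ i + aa θ 6 < π / 2 + 1) := by
  intro i σ hi hσ
  have hpi := Real.pi_lt_d6
  have hanti := aa_anti hg hm
  have h1 : aa θ 4 ≤ aa θ i := hanti (by omega)
  have h6 := aa_pos hg 6
  rcases hσ with h | ⟨_, h⟩ | h | ⟨_, h⟩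
  · exact Or.inl h
  · exfalso; linarith
  · exact Or.inr h
  · exfalso; linarith

lemma step1a (hg : Good θ) (hm : Antitone θ) (hS : SmallD u θ) (hb : 0.72 ≤ aa θ 6)
    (h5 : 1.86 ≤ aa θ 5) : False := by
  have h4 := step0 hg hm hS
  have hpi1 := Real.pi_gt_d6
  have hpi2 := Real.pi_lt_d6
  have hanti := aa_anti hg hm
  have h62 := aa_le_two θ 6
  have hσ0 := sig_zero h4 hg hm hb
  have := levelL hg hm hS h4 (π / 2 - 1) 0 0 0.3555 0.711 0.711 (π / 2 + 1 - aa θ 6)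
    (by linarith) le_rfl le_rfl (by linarith) (by norm_num) (by norm_num)
    ⟨by norm_num, by linarith⟩ ⟨by linarith, by linarith⟩
    (fun i σ hi hσ => (hσ0 i σ hi hσ).le)
    (fun i σ hi hσ h => by linarith [aa_le_two θ i])
    (fun i σ hi hσ h _ => by
      have h1 : aa θ 4 ≤ aa θ i := hanti (by omega)
      linarith [hσ0 i σ hi hσ])
    ⟨fun _ => by linarith, by linarith [ss_le hg 5]⟩
    ⟨fun _ => le_rfl, by linarith [ss_le hg 6]⟩
    (fun h => by linarith)
  linarith [this.1]

lemma step1b (hg : Good θ) (hm : Antitone θ) (hS : SmallD u θ) (hb : 0.72 ≤ aa θ 6)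
    (h5 : aa θ 5 < 1.86) : False := by
  have h4 := step0 hg hm hS
  have hpi1 := Real.pi_gt_d6
  have hpi2 := Real.pi_lt_d6
  have hanti := aa_anti hg hm
  have h62 := aa_le_two θ 6
  have h65 : aa θ 6 ≤ aa θ 5 := hanti (by decide)
  have hσ0 := sig_zero h4 hg hm hb
  have s6 := ss_pos hg 6
  have s5 := ss_pos hg 5
  have s5b := big hg 0.374 h5.le (by norm_num) (by norm_num)
  have s6b := big hg (i := 6) 0.374 (h65.trans h5.le) (by norm_num) (by norm_num)
  have a4 : 1.88 < aa θ 4 := by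
    by_contra hcon
    push Not at hcon
    have := levelL hg hm hS h4 0 0.3464 0 0.711 0 0 0
      le_rfl (by linarith) (by norm_num) (by norm_num; linarith) (by norm_num) (by norm_num)
      ⟨le_rfl, by linarith⟩ ⟨by linarith, by linarith⟩
      (fun i σ hi hσ => (hσ0 i σ hi hσ).le)
      (fun i σ hi hσ h => by
        have h1 : aa θ 4 ≤ aa θ i := hanti (by omega)
        linarith [hσ0 i σ hi hσ])
      (fun i σ hi hσ h h' => by
        have := big hg 0.3464 h (by norm_num) (by norm_num)
        norm_num at this
        linarith [hσ0 i σ hi hσ])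
      ⟨fun _ => by linarith, by linarith⟩
      ⟨fun _ => by linarith, by linarith⟩
      (fun h => by
        have := claim0 hg {5, 6} (by
          intro i hi; simp at hi; rcases hi with rfl | rfl <;> linarith)
          (by rw [Finset.sum_pair (by decide)]; exact h)
        rw [Finset.sum_pair (by decide)] at this
        exact ⟨by linarith, fun h => by linarith⟩)
    have := this.2 (by norm_num; linarith)
    linarith
  have hs688 : ∀ (i : Fin 7) (σ : ℝ), i < 5 → Sig θ i σ → π / 2 + 1 - aa θ i + σ ≤ 0.6908 := by
    intro i σ hi hσ
    have h1 : aa θ 4 ≤ aa θ i := hanti (by omega)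
    linarith [hσ0 i σ hi hσ]
  have h56 : aa θ 5 + aa θ 6 < π / 2 + 1 := by
    by_contra hcon
    push Not at hcon
    have := levelL hg hm hS h4 (π / 2 - 1) 0 0 0.3454 0.6908 (π / 2 + 1 - aa θ 5)
      (π / 2 + 1 - aa θ 6)
      (by linarith) le_rfl le_rfl (by linarith) (by norm_num) (by norm_num)
      ⟨by linarith, by linarith⟩ ⟨by linarith, by linarith⟩
      (fun i σ hi hσ => (hσ0 i σ hi hσ).le)
      (fun i σ hi hσ h => by linarith [aa_le_two θ i])
      (fun i σ hi hσ h _ => hs688 i σ hi hσ)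
      ⟨fun _ => le_rfl, by linarith [ss_le hg 5]⟩
      ⟨fun _ => le_rfl, by linarith [ss_le hg 6]⟩
      (fun h => by linarith)
    linarith [this.1]
  have s6c := small hg (i := 6) (X := 1.2854) 0.7 0.089 (by linarith) (by norm_num)
    (by norm_num) (by norm_num) (by norm_num)
  have hsum : aa θ 5 + 0.911 * aa θ 6 ≤ 2.3125 := by
    have hc0 := claim0 hg {5, 6} (by
          intro i hi; simp at hi; rcases hi with rfl | rfl <;> linarith)
          (by rw [Finset.sum_pair (by decide)]; exact h56)
    rw [Finset.sum_pair (by decide)] at hc0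
    have := levelL hg hm hS h4 (π / 2 - 1) 0 0 0.3454 0.6908 (π / 2 + 1 - aa θ 5 + ss θ 6)
      (π / 2 + 1 - aa θ 6)
      (by linarith) le_rfl le_rfl (by linarith) (by norm_num) (by norm_num)
      ⟨by linarith, by linarith⟩ ⟨by linarith, by linarith⟩
      (fun i σ hi hσ => (hσ0 i σ hi hσ).le)
      (fun i σ hi hσ h => by linarith [aa_le_two θ i])
      (fun i σ hi hσ h _ => hs688 i σ hi hσ)
      ⟨fun _ => by linarith, by linarith [ss_le hg 5]⟩
      ⟨fun _ => le_rfl, by linarith [ss_le hg 6]⟩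
      (fun h => ⟨by linarith, fun _ => Or.inl le_rfl⟩)
    linarith [this.1]
  have hZ : ss θ 5 + ss θ 6 ≤ 0.3617 := by
    by_cases h1 : aa θ 6 ≤ 1
    · have e5 := big hg (i := 5) (X := 1.6566) 0.586 (by linarith) (by norm_num) (by norm_num)
      have e6 := small hg (i := 6) (X := 1) 0.526 0.0484 h1 (by norm_num)
        (by norm_num) (by norm_num) (by norm_num)
      norm_num at e5
      linarith
    · push Not at h1
      have e5 := big hg (i := 5) (X := 1.4015) 0.7735 (by linarith) (by norm_num) (by norm_num)
      norm_num at e5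
      linarith
  have := levelL hg hm hS h4 0.209 0.2012 0 0.6113 0.6908 0 0
    (by norm_num) (by linarith) (by norm_num) (by norm_num; linarith) (by norm_num) (by norm_num)
    ⟨by linarith, by linarith⟩ ⟨by linarith, by linarith⟩
    (fun i σ hi hσ => (hσ0 i σ hi hσ).le)
    (fun i σ hi hσ h => by
      norm_num at h
      linarith [hσ0 i σ hi hσ])
    (fun i σ hi hσ h _ => hs688 i σ hi hσ)
    ⟨fun _ => by linarith, by linarith⟩
    ⟨fun _ => by linarith, by linarith⟩
    (fun h => ⟨by linarith, fun _ => by linarith⟩)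
  linarith [this.1]

/-- Sum of a function that is constant on the first five indices. -/
lemma sum_five (x y : ℝ) :
    ∑ i : Fin 7, (if i = 6 then 0 else if i = 5 then y else x) = 5 * x + y := by
  rw [Fin.sum_univ_seven]
  rw [if_neg (by decide), if_neg (by decide), if_neg (by decide), if_neg (by decide),
    if_neg (by decide), if_neg (by decide), if_neg (by decide), if_neg (by decide),
    if_neg (by decide), if_neg (by decide), if_neg (by decide), if_pos rfl, if_pos rfl]
  ring

lemma special5 (hg : Good θ) (hm : Antitone θ) (hS : SmallD u θ) (hb : aa θ 6 < 0.72)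
    (h5 : 1.3 < aa θ 5) (x y ε : ℝ) (hε : 0 ≤ ε) (h4 : 2 - ε ≤ aa θ 4)
    (hx : π / 2 - 1 + ε + ss θ 6 ≤ x) (hx1 : x ≤ 1) (hy : π / 2 + 1 - aa θ 5 + ss θ 6 ≤ y)
    (hy1 : y ≤ 1) (hgy : π / 2 - 1 + ε + ss θ 6 / 2 ≤ y)
    (hnear : π - 2 < ss θ 5 + ss θ 6 → 2 - ε ≤ aa θ 5) (hs6 : ss θ 6 ≤ 0.0232 * aa θ 6) :
    2 * π - (π / 2 + 1) + aa θ 6 ≤ 5 * x + y := by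
  have hpi1 := Real.pi_gt_d6
  have hpi2 := Real.pi_lt_d6
  have hanti := aa_anti hg hm
  have s6 := ss_pos hg 6
  have a6 := aa_pos hg 6
  have h45 : aa θ 5 ≤ aa θ 4 := hanti (by decide)
  have hi4 : ∀ i : Fin 7, i ≠ 6 → i ≠ 5 → aa θ 4 ≤ aa θ i := fun i h1 h2 => hanti (by omega)
  have hi5 : ∀ i : Fin 7, i ≠ 6 → aa θ 5 ≤ aa θ i := fun i h1 => hanti (by omega)
  have := special hg hS (fun i hi => lt_of_lt_of_le h5 (hi5 i hi)) hb
    (fun i => by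
      have : aa θ 6 ≤ aa θ i := hanti (by omega)
      linarith)
    (fun i => if i = 6 then 0 else if i = 5 then y else x) (π / 2 - 1 + ε + ss θ 6 / 2)
    (by linarith) (by simp)
    (by
      intro i hi
      by_cases e : i = 5
      · subst e
        simp only [if_neg hi, if_true]
        exact ⟨by linarith, fun _ => by linarith, by linarith, by linarith⟩
      · simp only [if_neg hi, if_neg e]
        have := hi4 i hi e
        exact ⟨by linarith, fun _ => by linarith, by linarith, by linarith⟩)
    (by
      intro i hi hh _
      by_cases e : i = 5
      · subst e
        linarith [hnear hh]
      · have := hi4 i hi e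
        linarith)
  rwa [sum_five] at this

lemma step2a (hg : Good θ) (hm : Antitone θ) (hS : SmallD u θ) (hb : aa θ 6 < 0.72)
    (h5 : 1.86 ≤ aa θ 5) : False := by
  have h4 := step0 hg hm hS
  have hpi1 := Real.pi_gt_d6
  have hpi2 := Real.pi_lt_d6
  have hanti := aa_anti hg hm
  have a6 := aa_pos hg 6
  have s6 := ss_pos hg 6
  have h45 : aa θ 5 ≤ aa θ 4 := hanti (by decide)
  have s6b := small hg (i := 6) (X := 0.72) 0.3685 0.0232 (by linarith) (by norm_num)
    (by norm_num) (by norm_num) (by norm_num)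
  have hsig := sig_six h4 hg hm (by linarith)
  have hσ : ∀ i σ, i < 5 → Sig θ i σ → σ ≤ ss θ 6 := by
    intro i σ hi h
    rcases hsig i σ hi h with h | h <;> linarith
  have hnear : π - 2 < ss θ 5 + ss θ 6 → 2 - 0.0169 ^ 2 < aa θ 5 := by
    intro h
    by_contra hcon
    push Not at hcon
    have := big hg 0.0169 hcon (by norm_num) (by norm_num)
    norm_num at this
    linarith
  have a4 : 2 - 0.0169 ^ 2 < aa θ 4 := by
    by_contra hcon
    push Not at hcon
    have hs5 := big hg (i := 5) 0.0169 (h45.trans hcon) (by norm_num) (by norm_num)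
    norm_num at hs5
    have := levelL hg hm hS h4 (π / 2 - 1 - ss θ 6) 0.0169 (ss θ 6) 0.5878 0.7276 0.7276 0
      (by linarith) (by linarith) (by norm_num) (by norm_num; linarith) (by norm_num) (by norm_num)
      ⟨by norm_num, by linarith⟩ ⟨le_rfl, by linarith⟩ hσ
      (fun i σ hi h h' => by
        norm_num at h'
        linarith [hσ i σ hi h])
      (fun i σ hi h _ _ => by
        have h1 : aa θ 4 ≤ aa θ i := hanti (by omega)
        linarith [hσ i σ hi h])
      ⟨fun _ => by linarith, by linarith⟩
      ⟨fun _ => by linarith, by linarith⟩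
      (fun h => ⟨by linarith, fun _ => Or.inl (by linarith)⟩)
    linarith [this.2 hcon]
  norm_num at a4 hnear
  have := special5 hg hm hS hb (by linarith) 0.5878 0.7276 0.00029 (by norm_num) (by linarith)
    (by linarith) (by norm_num) (by linarith) (by norm_num) (by linarith)
    (fun h => by linarith [hnear h]) s6b
  linarith

lemma step2b (hg : Good θ) (hm : Antitone θ) (hS : SmallD u θ) (hb : aa θ 6 < 0.72)
    (h5 : aa θ 5 < 1.86) : False := by
  have h4 := step0 hg hm hS
  have hpi1 := Real.pi_gt_d6
  have hpi2 := Real.pi_lt_d6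
  have hanti := aa_anti hg hm
  have a6 := aa_pos hg 6
  have s6 := ss_pos hg 6
  have s5 := ss_pos hg 5
  have h45 : aa θ 5 ≤ aa θ 4 := hanti (by decide)
  have hi4 : ∀ i : Fin 7, i < 5 → aa θ 4 ≤ aa θ i := fun i h => hanti (by omega)
  have s6b := small hg (i := 6) (X := 0.72) 0.3685 0.0232 (by linarith) (by norm_num)
    (by norm_num) (by norm_num) (by norm_num)
  have s5b := big hg 0.374 h5.le (by norm_num) (by norm_num)
  norm_num at s5b
  have hss := sig_small h4 hg hm
  have a5 : 1.62 < aa θ 5 := by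
    by_contra hcon
    push Not at hcon
    have s5c := big hg 0.616 hcon (by norm_num) (by norm_num)
    norm_num at s5c
    have := levelL hg hm hS h4 0.26 0.1797 0.0161 0.62 0.728 0 0
      (by norm_num) (by linarith) (by norm_num) (by norm_num; linarith) (by norm_num) (by norm_num)
      ⟨by norm_num, by linarith⟩ ⟨le_rfl, by linarith⟩ hss
      (fun i σ hi h h' => by
        norm_num at h'
        linarith [hss i σ hi h])
      (fun i σ hi h _ _ => by
        linarith [hss i σ hi h, hi4 i hi])
      ⟨fun _ => by linarith, by linarith⟩
      ⟨fun _ => by linarith, by linarith⟩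
      (fun h => ⟨by linarith, fun _ => Or.inl (by linarith)⟩)
    linarith [this.1]
  have hsig := sig_six h4 hg hm a5
  have hσ : ∀ i σ, i < 5 → Sig θ i σ → σ ≤ ss θ 6 := by
    intro i σ hi h
    rcases hsig i σ hi h with h | h <;> linarith
  by_cases hb2 : 0.572 ≤ aa θ 6
  · have a4 : 2 - 0.0169 ^ 2 < aa θ 4 := by
      by_contra hcon
      push Not at hcon
      have := levelL hg hm hS h4 (π / 2 - 1 - ss θ 6) 0.0169 (ss θ 6) 0.5711 0.7276 0.9676 0
        (by linarith) (by linarith) (by norm_num) (by norm_num; linarith) (by norm_num)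
        (by norm_num)
        ⟨by norm_num, by linarith⟩ ⟨le_rfl, by linarith⟩ hσ
        (fun i σ hi h h' => by
          norm_num at h'
          rcases hsig i σ hi h with h | h <;> linarith)
        (fun i σ hi h _ _ => by
          linarith [hσ i σ hi h, hi4 i hi])
        ⟨fun _ => by linarith, by linarith⟩
        ⟨fun _ => by linarith, by linarith⟩
        (fun h => ⟨by linarith, fun _ => Or.inl (by linarith)⟩)
      linarith [this.2 hcon]
    norm_num at a4
    have := special5 hg hm hS hb (by linarith) 0.5878 0.9676 0.00029 (by norm_num) (by linarith)
      (by linarith) (by norm_num) (by linarith) (by norm_num) (by linarith)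
      (fun h => by linarith) s6b
    linarith
  push Not at hb2
  have s6c := small hg (i := 6) (X := 0.572) 0.2903 0.01425 (by linarith) (by norm_num)
    (by norm_num) (by norm_num) (by norm_num)
  have a5' : 1.716 < aa θ 5 := by
    by_contra hcon
    push Not at hcon
    have s5c := big hg 0.5329 hcon (by norm_num) (by norm_num)
    norm_num at s5c
    have := levelL hg hm hS h4 0.202 0.2107 0.00816 0.6235 0.728 0 0
      (by norm_num) (by linarith) (by norm_num) (by norm_num; linarith) (by norm_num) (by norm_num)
      ⟨by norm_num, by linarith⟩ ⟨le_rfl, by linarith⟩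
      (fun i σ hi h => by linarith [hσ i σ hi h])
      (fun i σ hi h h' => by
        norm_num at h'
        linarith [hσ i σ hi h])
      (fun i σ hi h _ _ => by
        linarith [hσ i σ hi h, hi4 i hi])
      ⟨fun _ => by linarith, by linarith⟩
      ⟨fun _ => by linarith, by linarith⟩
      (fun h => ⟨by linarith, fun _ => Or.inl (by linarith)⟩)
    linarith [this.1]
  have a4 : 2 - 0.0083 ^ 2 < aa θ 4 := by
    by_contra hcon
    push Not at hcon
    have := levelL hg hm hS h4 (π / 2 - 1 - ss θ 6) 0.0083 (ss θ 6) 0.5791 0.719 0.8631 0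
      (by linarith) (by linarith) (by norm_num) (by norm_num; linarith) (by norm_num)
      (by norm_num)
      ⟨by norm_num, by linarith⟩ ⟨le_rfl, by linarith⟩ hσ
      (fun i σ hi h h' => by
        norm_num at h'
        linarith [hσ i σ hi h])
      (fun i σ hi h _ _ => by
        linarith [hσ i σ hi h, hi4 i hi])
      ⟨fun _ => by linarith, by linarith⟩
      ⟨fun _ => by linarith, by linarith⟩
      (fun h => ⟨by linarith, fun _ => Or.inl (by linarith)⟩)
    linarith [this.2 hcon]
  norm_num at a4
  have := special5 hg hm hS hb (by linarith) (π / 2 - 1 + 0.0001 + ss θ 6)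
    (π / 2 + 1 - aa θ 5 + ss θ 6) 0.0001 (by norm_num) (by linarith)
    le_rfl (by linarith) le_rfl (by linarith) (by linarith)
    (fun h => by linarith) s6b
  linarith

theorem no_small (hg : Good θ) (hm : Antitone θ) (hS : SmallD u θ) : False := by
  rcases le_or_gt 0.72 (aa θ 6) with hb | hb <;> rcases le_or_gt 1.86 (aa θ 5) with h5 | h5
  · exact step1a hg hm hS hb h5
  · exact step1b hg hm hS hb h5
  · exact step2a hg hm hS hb h5
  · exact step2b hg hm hS hb h5

/-! ### Reduction to the normalized model -/

lemma chordLen_nonneg (x y : ℝ) : 0 ≤ chordLen x y := by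
  have h1 := arc_nonneg x y
  have h2 := arc_le_pi x y
  have := Real.sin_nonneg_of_nonneg_of_le_pi (x := arcDist x y / 2) (by linarith)
    (by linarith [Real.pi_pos])
  unfold chordLen; linarith

lemma walk_nonneg (q : ℝ) (L : List (ℝ × ℝ)) : ∀ p, 0 ≤ walkCost q p L := by
  induction L with
  | nil => intro p; exact arc_nonneg p q
  | cons e L ih =>
    intro p
    have h1 := arc_nonneg p e.1
    have h2 := chordLen_nonneg e.1 e.2
    have h3 := ih e.2
    simp only [walkCost]; linarith

lemma dS_le (S : Finset (ℝ × ℝ)) (p q : ℝ) (L : List (ℝ × ℝ))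
    (hL : ∀ e ∈ L, e ∈ S ∨ (e.2, e.1) ∈ S) : dS S p q ≤ walkCost q p L := by
  refine csInf_le ⟨0, ?_⟩ ⟨L, hL, rfl⟩
  rintro _ ⟨L', _, rfl⟩
  exact walk_nonneg q L' p

lemma dS_le_arc (S : Finset (ℝ × ℝ)) (p q : ℝ) : dS S p q ≤ arcDist p q :=
  dS_le S p q [] (by simp)

lemma dS_le_diam (S : Finset (ℝ × ℝ)) (p q : ℝ) : dS S p q ≤ diamS S := by
  refine le_csSup ⟨π, ?_⟩ ⟨p, q, rfl⟩
  rintro _ ⟨p', q', rfl⟩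
  exact (dS_le_arc S p' q').trans (arc_le_pi _ _)

lemma norm_sc (s : ℝ × ℝ) : ∃ v, (Eqv s.1 v ∧ Eqv s.2 (v + 2 * (arcDist s.1 s.2 / 2))) ∨
    (Eqv s.2 v ∧ Eqv s.1 (v + 2 * (arcDist s.1 s.2 / 2))) := by
  obtain ⟨n, hn⟩ := arc_attain s.1 s.2
  rcases le_total (s.1 - s.2 + 2 * π * n) 0 with h | h
  · rw [abs_of_nonpos h] at hn
    exact ⟨s.1, Or.inl ⟨⟨0, by simp⟩, ⟨n, by linarith⟩⟩⟩
  · rw [abs_of_nonneg h] at hn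
    exact ⟨s.2, Or.inr ⟨⟨0, by simp⟩, ⟨-n, by push_cast; linarith⟩⟩⟩

lemma W_congr {q p p' : ℝ} (h : Eqv p p') (L : List (Fin 7 × Bool)) :
    W u θ q p L = W u θ q p' L := by
  cases L with
  | nil => exact arc_congr_left h q
  | cons e L => simp only [W]; rw [arc_congr_left h]

lemma short01 : IsShortcut (0, 1) := by
  have hpi := Real.pi_gt_three
  unfold IsShortcut
  rw [arc_eq_of_le (t := -1) (by norm_num) (by rw [abs_neg, abs_one]; linarith)]
  norm_num

lemma enum7 (S : Finset (ℝ × ℝ)) (hc : S.card ≤ 7) (hs : ∀ s ∈ S, IsShortcut s) :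
    ∃ e : Fin 7 → ℝ × ℝ, (∀ i, IsShortcut (e i)) ∧ ∀ s ∈ S, ∃ i, e i = s := by
  refine ⟨fun i => S.toList.getD i (0, 1), ?_, ?_⟩
  · intro i
    change IsShortcut (S.toList.getD i (0, 1))
    by_cases h : (i : ℕ) < S.toList.length
    · rw [List.getD_eq_getElem _ _ h]
      exact hs _ (Finset.mem_toList.mp (List.getElem_mem h))
    · rw [List.getD_eq_default _ _ (not_lt.mp h)]
      exact short01
  · intro s hsS
    obtain ⟨n, hn, e⟩ := List.getElem_of_mem (Finset.mem_toList.mpr hsS)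
    have hn' := hn
    rw [Finset.length_toList] at hn'
    refine ⟨⟨n, by omega⟩, ?_⟩
    simp only
    rw [List.getD_eq_getElem _ _ hn, e]

theorem lower (S : Finset (ℝ × ℝ)) (hc : S.card ≤ 7) (hs : ∀ s ∈ S, IsShortcut s) :
    π / 2 + 1 ≤ diamS S := by
  by_contra hcon
  push Not at hcon
  obtain ⟨e0, he0, hcov0⟩ := enum7 S hc hs
  set τ := Tuple.sort (fun i => -(arcDist (e0 i).1 (e0 i).2 / 2)) with hτ
  set e : Fin 7 → ℝ × ℝ := fun i => e0 (τ i) with he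
  set θ : Fin 7 → ℝ := fun i => arcDist (e i).1 (e i).2 / 2 with hθ
  have hanti : Antitone θ := by
    intro i j hij
    have := Tuple.monotone_sort (fun i => -(arcDist (e0 i).1 (e0 i).2 / 2)) hij
    simp only [Function.comp] at this
    simp only [hθ, he]
    linarith
  have hcov : ∀ s ∈ S, ∃ i, e i = s := by
    intro s hsS
    obtain ⟨i, hi⟩ := hcov0 s hsS
    exact ⟨τ.symm i, by simp [he, hi]⟩
  have hgood : Good θ := by
    intro i
    have h1 := arc_nonneg (e i).1 (e i).2
    have h2 := arc_le_pi (e i).1 (e i).2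
    have h3 : arcDist (e i).1 (e i).2 ≠ 0 := he0 (τ i)
    have h4 : 0 < arcDist (e i).1 (e i).2 := lt_of_le_of_ne h1 h3.symm
    simp only [hθ]
    constructor <;> linarith
  have hv := fun i => norm_sc (e i)
  choose u hu using hv
  have hedge : ∀ d : ℝ × ℝ, (d ∈ S ∨ (d.2, d.1) ∈ S) → ∃ f : Fin 7 × Bool,
      Eqv d.1 (src u θ f) ∧ Eqv d.2 (tgt u θ f) ∧ chordLen d.1 d.2 = 2 * Real.sin (θ f.1) := by
    intro d hd
    rcases hd with hd | hd
    · obtain ⟨i, hi⟩ := hcov _ hd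
      have hch : chordLen d.1 d.2 = 2 * Real.sin (θ i) := by
        simp only [chordLen, hθ, hi]
      rcases hu i with ⟨h1, h2⟩ | ⟨h1, h2⟩
      · refine ⟨(i, true), ?_, ?_, hch⟩
        · simp only [src, if_true]; rw [← hi]; exact h1
        · simp only [tgt, if_true]; rw [← hi]; exact h2
      · refine ⟨(i, false), ?_, ?_, hch⟩
        · simp only [src]; rw [← hi]; exact h2
        · simp only [tgt]; rw [← hi]; exact h1
    · obtain ⟨i, hi⟩ := hcov _ hd
      have hch : chordLen d.1 d.2 = 2 * Real.sin (θ i) := by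
        simp only [chordLen, hθ, hi]; rw [arc_symm]
      have e1 : (e i).1 = d.2 := by rw [hi]
      have e2 : (e i).2 = d.1 := by rw [hi]
      rcases hu i with ⟨h1, h2⟩ | ⟨h1, h2⟩
      · refine ⟨(i, false), ?_, ?_, hch⟩
        · simp only [src]; rw [← e2]; exact h2
        · simp only [tgt]; rw [← e1]; exact h1
      · refine ⟨(i, true), ?_, ?_, hch⟩
        · simp only [src, if_true]; rw [← e2]; exact h1
        · simp only [tgt, if_true]; rw [← e1]; exact h2
  have hlist : ∀ (q : ℝ) (L : List (ℝ × ℝ)), (∀ d ∈ L, d ∈ S ∨ (d.2, d.1) ∈ S) → ∀ p,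
      ∃ L', W u θ q p L' = walkCost q p L := by
    intro q L
    induction L with
    | nil => intro _ p; exact ⟨[], rfl⟩
    | cons d L ih =>
      intro hL p
      obtain ⟨L', hL'⟩ := ih (fun d' hd' => hL d' (List.mem_cons_of_mem _ hd')) d.2
      obtain ⟨f, h1, h2, h3⟩ := hedge d (hL d List.mem_cons_self)
      refine ⟨f :: L', ?_⟩
      simp only [W, walkCost]
      rw [← hL', W_congr h2, h3, arc_congr_right h1]
  refine no_small (u := u) hgood hanti ?_
  intro p q
  have h1 : dS S p q < π / 2 + 1 := lt_of_le_of_lt (dS_le_diam S p q) hcon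
  obtain ⟨c, ⟨L, hL, rfl⟩, hlt⟩ := exists_lt_of_csInf_lt (s := {c | ∃ L : List (ℝ × ℝ),
    (∀ e ∈ L, e ∈ S ∨ (e.2, e.1) ∈ S) ∧ c = walkCost q p L}) ⟨_, [], by simp, rfl⟩ h1
  obtain ⟨L', hL'⟩ := hlist q L hL p
  exact ⟨L', by rw [hL']; exact hlt⟩

/-! ### The upper bound -/

/-- six equally spaced diameters -/
noncomputable def six : Finset (ℝ × ℝ) :=
  (Finset.range 6).image fun j : ℕ => ((j : ℝ) * π / 6, (j : ℝ) * π / 6 + π)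

lemma chord_diam (x : ℝ) : chordLen x (x + π) = 2 := by
  have hpi := Real.pi_pos
  unfold chordLen
  rw [arc_eq_of_le (t := -π) (by ring) (by rw [abs_neg, abs_of_pos hpi]), abs_neg, abs_of_pos hpi,
    Real.sin_pi_div_two]
  norm_num

lemma chord_symm (x y : ℝ) : chordLen x y = chordLen y x := by
  unfold chordLen; rw [arc_symm]

lemma upper_pt (S : Finset (ℝ × ℝ)) (hS : six ⊆ S) (p q : ℝ) : dS S p q ≤ π / 2 + 1 := by
  have hpi1 := Real.pi_gt_d2
  have hpi2 := Real.pi_lt_d2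
  by_cases hle : arcDist p q ≤ π / 2 + 1
  · exact (dS_le_arc S p q).trans hle
  push Not at hle
  have ht : ∃ t, |t| ≤ π / 2 - 1 ∧ Eqv q (p + π + t) := by
    obtain ⟨n, hn⟩ := arc_attain p q
    have h2 := arc_le_pi p q
    rcases le_total (p - q + 2 * π * n) 0 with h | h
    · rw [abs_of_nonpos h] at hn
      refine ⟨arcDist p q - π, ?_, ⟨n, by rw [hn]; ring⟩⟩
      rw [abs_le]; constructor <;> linarith
    · rw [abs_of_nonneg h] at hn
      refine ⟨π - arcDist p q, ?_, ⟨n - 1, by rw [hn]; push_cast; ring⟩⟩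
      rw [abs_le]; constructor <;> linarith
  obtain ⟨t, ht, hq⟩ := ht
  set k : ℤ := round ((2 * p + t) / (π / 3)) with hk
  have hr := abs_sub_round ((2 * p + t) / (π / 3))
  rw [← hk] at hr
  have hr2 : |2 * (p - k * π / 6) + t| ≤ π / 6 := by
    have e : 2 * (p - k * π / 6) + t = (π / 3) * ((2 * p + t) / (π / 3) - k) := by
      field_simp
      ring
    rw [e, abs_mul, abs_of_pos (by linarith)]
    nlinarith
  have hx : |p - k * π / 6| + |p - k * π / 6 + t| ≤ π / 2 - 1 := by
    rw [abs_le] at hr2 ht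
    rcases abs_cases (p - k * π / 6) with ⟨h1, _⟩ | ⟨h1, _⟩ <;>
      rcases abs_cases (p - k * π / 6 + t) with ⟨h2, _⟩ | ⟨h2, _⟩ <;> rw [h1, h2] <;> linarith
  -- an edge of `S` realizing the diameter
  have hE : ∃ d : ℝ × ℝ, (d ∈ S ∨ (d.2, d.1) ∈ S) ∧ chordLen d.1 d.2 = 2 ∧
      Eqv d.1 (k * π / 6) ∧ Eqv d.2 (k * π / 6 + π) := by
    have hj0 := Int.emod_nonneg k (show (6:ℤ) ≠ 0 by norm_num)
    have hj1 := Int.emod_lt_of_pos k (show (0:ℤ) < 6 by norm_num)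
    have hjk := Int.mul_ediv_add_emod k 6
    obtain ⟨j, hj⟩ := Int.eq_ofNat_of_zero_le hj0
    have hj6 : j < 6 := by omega
    have hmem : ((j : ℝ) * π / 6, (j : ℝ) * π / 6 + π) ∈ S :=
      hS (Finset.mem_image.mpr ⟨j, Finset.mem_range.mpr hj6, rfl⟩)
    rw [hj] at hjk
    have hkr : (k : ℝ) = 6 * ((k / 6 : ℤ) : ℝ) + j := by exact_mod_cast hjk.symm
    rcases Int.even_or_odd' (k / 6) with ⟨m, hm | hm⟩
    · rw [hm] at hkr
      push_cast at hkr
      refine ⟨_, Or.inl hmem, chord_diam _, ⟨-m, ?_⟩, ⟨-m, ?_⟩⟩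
      · simp only; rw [hkr]; push_cast; ring
      · simp only; rw [hkr]; push_cast; ring
    · rw [hm] at hkr
      push_cast at hkr
      refine ⟨((j : ℝ) * π / 6 + π, (j : ℝ) * π / 6), Or.inr hmem, ?_, ⟨-m, ?_⟩, ⟨-m - 1, ?_⟩⟩
      · simp only; rw [chord_symm]; exact chord_diam _
      · simp only; rw [hkr]; push_cast; ring
      · simp only; rw [hkr]; push_cast; ring
  obtain ⟨d, hdS, hd2, hd1, hd3⟩ := hE
  refine (dS_le S p q [d] (by intro e he; rw [List.mem_singleton] at he; rw [he]; exact hdS)).trans ?_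
  simp only [walkCost]
  rw [hd2, arc_congr_right hd1, arc_congr_left hd3, arc_congr_right hq]
  have h1 := arc_le_abs p (k * π / 6)
  have h2 := arc_le_abs (k * π / 6 + π) (p + π + t)
  rw [show (k : ℝ) * π / 6 + π - (p + π + t) = -(p - k * π / 6 + t) by ring, abs_neg] at h2
  linarith

lemma upper (S : Finset (ℝ × ℝ)) (hS : six ⊆ S) : diamS S ≤ π / 2 + 1 := by
  refine csSup_le ⟨_, 0, 0, rfl⟩ ?_
  rintro _ ⟨p, q, rfl⟩
  exact upper_pt S hS p q

lemma six_card : six.card = 6 := by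
  unfold six
  rw [Finset.card_image_of_injective, Finset.card_range]
  intro a b hab
  simp only [Prod.mk.injEq] at hab
  have h1 := hab.1
  have hpi := Real.pi_pos
  have : (a : ℝ) * π = b * π := by linarith
  exact_mod_cast mul_right_cancel₀ hpi.ne' this

lemma six_short : ∀ s ∈ six, IsShortcut s := by
  intro s hs
  have hpi := Real.pi_pos
  obtain ⟨j, _, rfl⟩ := Finset.mem_image.mp hs
  unfold IsShortcut
  simp only
  rw [arc_eq_of_le (t := -π) (by ring) (by rw [abs_neg, abs_of_pos hpi]), abs_neg, abs_of_pos hpi]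
  exact hpi.ne'

lemma not_mem_six : ((0 : ℝ), (1 : ℝ)) ∉ six := by
  intro hs
  have hpi := Real.pi_gt_three
  obtain ⟨j, _, h⟩ := Finset.mem_image.mp hs
  simp only [Prod.mk.injEq] at h
  linarith [h.1, h.2]

lemma diamK_eq (k : ℕ) (hk : k ≤ 7) (S : Finset (ℝ × ℝ)) (hc : S.card = k)
    (hs : ∀ s ∈ S, IsShortcut s) (h6 : six ⊆ S) : diamK k = π / 2 + 1 := by
  have hlb : ∀ d ∈ {d | ∃ S : Finset (ℝ × ℝ), S.card = k ∧ (∀ s ∈ S, IsShortcut s) ∧ d = diamS S},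
      π / 2 + 1 ≤ d := by
    rintro _ ⟨T, hT, hTs, rfl⟩
    exact lower T (by omega) hTs
  apply le_antisymm
  · exact (csInf_le ⟨_, hlb⟩ ⟨S, hc, hs, rfl⟩).trans (upper S h6)
  · exact le_csInf ⟨_, S, hc, hs, rfl⟩ hlb

/-- no configuration of at most seven shortcuts achieves diameter smaller
than `π/2 + 1`; consequently `diam(7) = diam(6) = π/2 + 1`. -/
theorem stmt4 :
    (∀ S : Finset (ℝ × ℝ), S.card ≤ 7 → (∀ s ∈ S, IsShortcut s) →
      π / 2 + 1 ≤ diamS S) ∧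
    diamK 7 = π / 2 + 1 ∧ diamK 6 = π / 2 + 1 := by
  refine ⟨fun S hc hs => lower S hc hs, ?_, ?_⟩
  · refine diamK_eq 7 le_rfl (insert ((0 : ℝ), (1 : ℝ)) six) ?_ ?_ (Finset.subset_insert _ _)
    · rw [Finset.card_insert_of_notMem not_mem_six, six_card]
    · intro s hs
      rcases Finset.mem_insert.mp hs with rfl | h
      · exact short01
      · exact six_short s h
  · exact diamK_eq 6 (by norm_num) six six_card six_short subset_rfl
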